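/- arXiv:0705.2253 — 2 statements merged into one kernel-verified Lean document; each statement's English description precedes it below -/
import Mathlib

section
/- For every integer n ≥ 2 there is a constant c > 0 (depending only on n) such that for all x, y ∈ SO(n), W_{D,2}(K_x, K_y) ≤ √(1 − 1/C(n,2)) · D(x,y) + c · D(x,y)². In particular, the map x ↦ K_x from (SO(n), D) to the space of probability measures with the W_{D,2} metric is locally √(1 − 1/C(n,2))-Lipschitz. -/
open MeasureTheory ENNReal Filter Topology Matrix

noncomputable section

/-- The (Borel) product measurable structure on matrices. -/
instance matrixMeasurableSpace {m n R : Type*} [MeasurableSpace R] :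
    MeasurableSpace (Matrix m n R) :=
  (inferInstance : MeasurableSpace (m → n → R))

/-- `η` is a coupling of `μ` and `ν`: its two marginals are `μ` and `ν`. -/
def IsCoupling {X : Type*} [MeasurableSpace X] (η : Measure (X × X)) (μ ν : Measure X) : Prop :=
  η.map Prod.fst = μ ∧ η.map Prod.snd = ν

/-- The `L^p` transportation cost (Wasserstein) distance associated with the distance
function `d`, with values in `ℝ≥0∞`:
`W_{d,p}(μ,ν) = inf { (∫ d(x,y)^p dη)^{1/p} : η a coupling of (μ,ν) }`. -/
def wassersteinE {X : Type*} [MeasurableSpace X] (d : X → X → ℝ≥0∞) (p : ℝ)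
    (μ ν : Measure X) : ℝ≥0∞ :=
  ⨅ (η : Measure (X × X)) (_ : IsCoupling η μ ν), (∫⁻ z, d z.1 z.2 ^ p ∂η) ^ (1 / p)

/-- The length of the curve `γ` over `[0,1]`, w.r.t. the distance function `d`:
the supremum, over all partitions `0 = t 0 ≤ t 1 ≤ ⋯ ≤ t k = 1` of `[0,1]`, of the sums of
the distances between consecutive points of the curve. -/
def pathLengthE {X : Type*} (d : X → X → ℝ≥0∞) (γ : ℝ → X) : ℝ≥0∞ :=
  ⨆ (k : ℕ) (t : Fin (k + 1) → ℝ) (_ : Monotone t) (_ : t 0 = 0) (_ : t (Fin.last k) = 1),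
    ∑ i : Fin k, d (γ (t i.castSucc)) (γ (t i.succ))

/-- The intrinsic (length) distance on the set `S` induced by the distance function `d`:
the infimum of `d`-lengths of continuous paths joining `a` to `b` inside `S`. -/
def intrinsicDistE {X : Type*} [TopologicalSpace X] (d : X → X → ℝ≥0∞) (S : Set X)
    (a b : X) : ℝ≥0∞ :=
  ⨅ (γ : ℝ → X) (_ : ContinuousOn γ (Set.Icc 0 1)) (_ : Set.MapsTo γ (Set.Icc 0 1) S)
    (_ : γ 0 = a) (_ : γ 1 = b), pathLengthE d γ

/-- `t` iterated steps of the Markov transition kernel `P`, started from the initial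
distribution `μ` (so `kernelIterate P t μ = μP^t`). -/
def kernelIterate {X : Type*} [MeasurableSpace X] (P : X → Measure X) :
    ℕ → Measure X → Measure X
  | 0, μ => μ
  | t + 1, μ => (kernelIterate P t μ).bind P

/-- A Haar probability measure for the multiplicative set `S`, viewed as a measure on the
ambient space: a probability measure carried by `S` that is invariant under left and right
translations by all elements of `S`. -/
def IsHaarLike {X : Type*} [MeasurableSpace X] [Mul X] (S : Set X) (μ : Measure X) : Prop :=
  IsProbabilityMeasure μ ∧ μ Sᶜ = 0 ∧
    ∀ a ∈ S, μ.map (fun x => a * x) = μ ∧ μ.map (fun x => x * a) = μ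

/-- The Haar probability measure of a compact matrix group `S` (such as `SO(n)` or `U(n)`),
viewed as a measure on the ambient matrix space.  For such `S` a translation-invariant
probability measure exists and is unique, so `haarLike S` is *the* Haar probability
measure of `S`. -/
def haarLike {X : Type*} [MeasurableSpace X] [Mul X] (S : Set X) : Measure X := by
  classical exact if h : ∃ μ, IsHaarLike S μ then h.choose else 0

/-- The set of pairs `1 ≤ i < j ≤ n` of indices. -/
def pairs (n : ℕ) : Finset (Fin n × Fin n) :=
  Finset.univ.filter fun p => p.1 < p.2

/-- The special orthogonal group `SO(n)`, as a subset of the `n × n` real matrices. -/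
def SO (n : ℕ) : Set (Matrix (Fin n) (Fin n) ℝ) :=
  {a | a * aᵀ = 1 ∧ a.det = 1}

/-- The Hilbert–Schmidt (Frobenius) distance `‖a - b‖_hs = √(Tr((a-b)ᵀ(a-b)))` between real
matrices, as an `ℝ≥0∞`-valued distance function. -/
def hsDist {n : ℕ} (a b : Matrix (Fin n) (Fin n) ℝ) : ℝ≥0∞ :=
  ENNReal.ofReal (Real.sqrt (Matrix.trace ((a - b)ᵀ * (a - b))))

/-- The intrinsic (Riemannian/length) metric `D` on `SO(n)` induced by the Hilbert–Schmidt
norm: the infimum of `hs`-lengths of continuous paths inside `SO(n)`. -/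
def DSO (n : ℕ) (a b : Matrix (Fin n) (Fin n) ℝ) : ℝ≥0∞ :=
  intrinsicDistE hsDist (SO n) a b

/-- The rotation `R(i,j,θ)` by the angle `θ` of the plane spanned by the `i`-th and `j`-th
canonical basis vectors: `R e_i = cos θ e_i + sin θ e_j`, `R e_j = cos θ e_j - sin θ e_i`,
and `R e_k = e_k` for `k ∉ {i,j}`. -/
def kacRot {n : ℕ} (i j : Fin n) (θ : ℝ) : Matrix (Fin n) (Fin n) ℝ :=
  Matrix.of fun k l =>
    if k = i ∧ l = i then Real.cos θ
    else if k = j ∧ l = i then Real.sin θ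
    else if k = i ∧ l = j then -Real.sin θ
    else if k = j ∧ l = j then Real.cos θ
    else if k = l then 1 else 0

/-- The uniform probability measure on the angle interval `[0, 2π]`. -/
def uniformAngle : Measure ℝ :=
  (ENNReal.ofReal (2 * Real.pi))⁻¹ • MeasureTheory.volume.restrict (Set.Icc 0 (2 * Real.pi))

/-- The transition kernel of Kac's random walk on `SO(n)`:
`K_x = (1/(2π·C(n,2))) ∑_{1≤i<j≤n} ∫₀^{2π} δ_{R(i,j,θ)·x} dθ`. -/
def kacKernel (n : ℕ) (x : Matrix (Fin n) (Fin n) ℝ) : Measure (Matrix (Fin n) (Fin n) ℝ) :=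
  (n.choose 2 : ℝ≥0∞)⁻¹ •
    ∑ p ∈ pairs n, uniformAngle.map fun θ => kacRot p.1 p.2 θ * x

/-!
The walks from `x` and `y` are coupled by rotating both in the same plane, the walk from `y` by an
extra angle `w` that depends on the plane. With `z = y xᵀ`, invariance of `D` turns the squared cost
in the `(i, j)` plane into `D(1, R(i,j,w) z)²`. Taking `w = (z i j - z j i) / 2`, almost the best
angle, gives `‖1 - R(i,j,w) z‖² ≤ ‖1 - z‖² - 2 w² + w⁴`. Since `z` is orthogonal, `1 - z` is
skew-symmetric up to second order, so the gains `2 w²` add up over all planes to `‖1 - z‖²` up to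
fourth order; averaging over the `C(n,2)` planes produces the factor `1 - 1/C(n,2)`.

The Hilbert–Schmidt distance may replace `D` throughout: it is smaller, and the curve
`t ↦ (1 + t S)(1 - t S)⁻¹`, with `S = (z - 1)(z + 1)⁻¹`, joins `1` to `z` in `SO(n)` and shows
`D(1, z)² ≤ ‖1 - z‖² + ‖1 - z‖⁴` when `‖1 - z‖ ≤ 1`. At distance at least `1`, the
coupling without extra angle gives `W ≤ D ≤ D²`.
-/

section IntrinsicDistance

variable {X Y : Type*}

theorem le_pathLengthE (d : X → X → ℝ≥0∞) (γ : ℝ → X) : d (γ 0) (γ 1) ≤ pathLengthE d γ := by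
  refine le_trans ?_ (le_iSup₂_of_le 1 (fun i : Fin 2 => ((i : ℕ) : ℝ)) (le_iSup_of_le
    (fun i j h => Nat.cast_le.2 h) (le_iSup_of_le (by simp) (le_iSup_of_le (by simp) le_rfl))))
  simp

theorem pathLengthE_comp_le {d : X → X → ℝ≥0∞} {d' : Y → Y → ℝ≥0∞} {f : X → Y}
    (hf : ∀ x y, d' (f x) (f y) ≤ d x y) (γ : ℝ → X) :
    pathLengthE d' (f ∘ γ) ≤ pathLengthE d γ :=
  iSup_mono fun _ => iSup_mono fun _ => iSup_mono fun _ => iSup_mono fun _ => iSup_mono fun _ =>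
    Finset.sum_le_sum fun _ _ => hf _ _

theorem sum_succ_sub_castSucc {G : Type*} [AddCommGroup G] {k : ℕ} (t : Fin (k + 1) → G) :
    ∑ i : Fin k, (t i.succ - t i.castSucc) = t (Fin.last k) - t 0 := by
  rw [Finset.sum_sub_distrib, sub_eq_sub_iff_add_eq_add, add_comm,
    (Fin.sum_univ_succ t).symm.trans (Fin.sum_univ_castSucc t), add_comm]

theorem pathLengthE_le_of_lipschitz {d : X → X → ℝ≥0∞} {γ : ℝ → X} {L : ℝ≥0∞}
    (h : ∀ s t, s ≤ t → d (γ s) (γ t) ≤ L * ENNReal.ofReal (t - s)) : pathLengthE d γ ≤ L := by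
  refine iSup₂_le fun k t => iSup_le fun hmono => iSup₂_le fun h0 h1 => ?_
  have hle (i : Fin k) : t i.castSucc ≤ t i.succ := hmono i.castSucc_le_succ
  calc ∑ i : Fin k, d (γ (t i.castSucc)) (γ (t i.succ))
      ≤ ∑ i : Fin k, L * ENNReal.ofReal (t i.succ - t i.castSucc) :=
        Finset.sum_le_sum fun i _ => h _ _ (hle i)
    _ = L * ENNReal.ofReal (∑ i : Fin k, (t i.succ - t i.castSucc)) := by
        rw [← Finset.mul_sum, ENNReal.ofReal_sum_of_nonneg fun i _ => sub_nonneg.2 (hle i)]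
    _ = L := by rw [sum_succ_sub_castSucc, h0, h1]; simp

variable [TopologicalSpace X] [TopologicalSpace Y]

theorem le_intrinsicDistE (d : X → X → ℝ≥0∞) (S : Set X) (a b : X) :
    d a b ≤ intrinsicDistE d S a b := by
  refine le_iInf₂ fun γ _ => le_iInf₂ fun _ h0 => le_iInf fun h1 => ?_
  simpa only [h0, h1] using le_pathLengthE d γ

theorem intrinsicDistE_le_pathLengthE (d : X → X → ℝ≥0∞) {S : Set X} {γ : ℝ → X}
    (hγ : ContinuousOn γ (Set.Icc 0 1)) (hS : Set.MapsTo γ (Set.Icc 0 1) S) :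
    intrinsicDistE d S (γ 0) (γ 1) ≤ pathLengthE d γ :=
  iInf₂_le_of_le γ hγ (iInf₂_le_of_le hS rfl (iInf_le _ rfl))

theorem intrinsicDistE_map_le {d : X → X → ℝ≥0∞} {d' : Y → Y → ℝ≥0∞} {f : X → Y} {S : Set X}
    {S' : Set Y} (hc : Continuous f) (hS : Set.MapsTo f S S')
    (hf : ∀ x y, d' (f x) (f y) ≤ d x y) (a b : X) :
    intrinsicDistE d' S' (f a) (f b) ≤ intrinsicDistE d S a b := by
  refine le_iInf₂ fun γ hγ => le_iInf₂ fun hγS h0 => le_iInf fun h1 => ?_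
  subst h0 h1
  exact (intrinsicDistE_le_pathLengthE d' (hc.comp_continuousOn hγ) (hS.comp hγS)).trans
    (pathLengthE_comp_le hf γ)

end IntrinsicDistance

section Frobenius

open scoped Matrix.Norms.Frobenius

variable {m n ι 𝕜 : Type*} [Fintype m] [Fintype n] [Fintype ι] [DecidableEq ι] [RCLike 𝕜]

theorem frobenius_norm_sq_eq_sum {α : Type*} [SeminormedAddCommGroup α] (M : Matrix m n α) :
    ‖M‖ ^ 2 = ∑ i, ∑ j, ‖M i j‖ ^ 2 := by
  simp only [frobenius_norm_def, Real.rpow_two]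
  rw [← Real.sqrt_eq_rpow, Real.sq_sqrt (by positivity)]

theorem ofReal_frobenius_norm_sq (M : Matrix m n 𝕜) : ((‖M‖ ^ 2 : ℝ) : 𝕜) = trace (Mᴴ * M) := by
  rw [frobenius_norm_sq_eq_sum, Finset.sum_comm]
  simp [trace, mul_apply, RCLike.conj_mul]

theorem frobenius_parallelogram_law (A B : Matrix m n 𝕜) :
    ‖A + B‖ ^ 2 + ‖A - B‖ ^ 2 = 2 * (‖A‖ ^ 2 + ‖B‖ ^ 2) := by
  have entrywise (i : m) (j : n) :
      ‖A i j + B i j‖ ^ 2 + ‖A i j - B i j‖ ^ 2 = 2 * (‖A i j‖ ^ 2 + ‖B i j‖ ^ 2) := by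
    simpa only [sq] using parallelogram_law_with_norm 𝕜 (A i j) (B i j)
  simp only [frobenius_norm_sq_eq_sum, ← Finset.sum_add_distrib, Finset.mul_sum,
    Matrix.add_apply, Matrix.sub_apply, entrywise]

theorem frobenius_norm_unitary_mul {U : Matrix ι ι 𝕜} (hU : U ∈ unitaryGroup ι 𝕜)
    (M : Matrix ι n 𝕜) : ‖U * M‖ = ‖M‖ := by
  have hU' : Uᴴ * U = 1 := mem_unitaryGroup_iff'.1 hU
  have hsq : ((‖U * M‖ ^ 2 : ℝ) : 𝕜) = (‖M‖ ^ 2 : ℝ) := by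
    rw [ofReal_frobenius_norm_sq, ofReal_frobenius_norm_sq, conjTranspose_mul, Matrix.mul_assoc,
      ← Matrix.mul_assoc Uᴴ, hU', Matrix.one_mul]
  exact (sq_eq_sq₀ (norm_nonneg _) (norm_nonneg _)).1 (RCLike.ofReal_injective hsq)

theorem frobenius_norm_mul_unitary {U : Matrix ι ι 𝕜} (hU : U ∈ unitaryGroup ι 𝕜)
    (M : Matrix m ι 𝕜) : ‖M * U‖ = ‖M‖ := by
  rw [← frobenius_norm_conjTranspose, conjTranspose_mul, ← star_eq_conjTranspose U,
    frobenius_norm_unitary_mul (Unitary.star_mem hU), frobenius_norm_conjTranspose]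

theorem frobenius_norm_one_sub_unitary_sq {z : Matrix ι ι 𝕜} (hz : z ∈ unitaryGroup ι 𝕜) :
    ‖1 - z‖ ^ 2 = 2 * Fintype.card ι - 2 * RCLike.re (trace z) := by
  have hz' : zᴴ * z = 1 := mem_unitaryGroup_iff'.1 hz
  have hexpand : (1 - z)ᴴ * (1 - z) = 1 - z - zᴴ + zᴴ * z := by
    rw [conjTranspose_sub, conjTranspose_one]; noncomm_ring
  have h := congrArg RCLike.re (ofReal_frobenius_norm_sq (1 - z))
  rw [hexpand, hz', RCLike.ofReal_re] at h
  rw [h]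
  simp only [trace_add, trace_sub, trace_one, trace_conjTranspose, map_add, map_sub,
    RCLike.natCast_re, RCLike.star_def, RCLike.conj_re]
  ring

-- For unitary `z`, the Hermitian part of `1 - z` is `(1 - z)ᴴ (1 - z) / 2`, of second order.
theorem frobenius_norm_unitary_sub_conjTranspose_sq {z : Matrix ι ι 𝕜}
    (hz : z ∈ unitaryGroup ι 𝕜) :
    ‖z - zᴴ‖ ^ 2 + ‖(1 - z)ᴴ * (1 - z)‖ ^ 2 = 4 * ‖1 - z‖ ^ 2 := by
  have hz' : zᴴ * z = 1 := mem_unitaryGroup_iff'.1 hz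
  have hherm : (1 - z)ᴴ * (1 - z) = (1 - z) + (1 - z)ᴴ := by
    rw [conjTranspose_sub, conjTranspose_one, Matrix.sub_mul, Matrix.mul_sub, Matrix.mul_sub, hz']
    simp only [Matrix.one_mul, Matrix.mul_one]
    abel
  have hskew : z - zᴴ = -((1 - z) - (1 - z)ᴴ) := by
    rw [conjTranspose_sub, conjTranspose_one]; abel
  have h := frobenius_parallelogram_law (1 - z) (1 - z)ᴴ
  rw [frobenius_norm_conjTranspose] at h
  rw [hskew, norm_neg, hherm]
  linarith

-- The cross terms `Mᴴ M S` and `S Mᴴ M` have the same trace and opposite signs.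
theorem frobenius_norm_mul_one_sub_skewAdjoint_sq {S : Matrix ι ι 𝕜}
    (hS : S ∈ skewAdjoint (Matrix ι ι 𝕜)) (M : Matrix m ι 𝕜) :
    ‖M * (1 - S)‖ ^ 2 = ‖M‖ ^ 2 + ‖M * S‖ ^ 2 := by
  have hS' : Sᴴ = -S := hS
  have hexpand : (M * (1 - S))ᴴ * (M * (1 - S)) =
      Mᴴ * M - Mᴴ * M * S + S * (Mᴴ * M) + (M * S)ᴴ * (M * S) := by
    simp only [conjTranspose_mul, conjTranspose_sub, hS', Matrix.mul_sub, Matrix.sub_mul,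
      Matrix.mul_one, Matrix.neg_mul, Matrix.mul_assoc]
    abel
  have h : ((‖M * (1 - S)‖ ^ 2 : ℝ) : 𝕜) = (‖M‖ ^ 2 + ‖M * S‖ ^ 2 : ℝ) := by
    rw [RCLike.ofReal_add]
    simp only [ofReal_frobenius_norm_sq, hexpand, trace_add, trace_sub, trace_mul_comm S]
    ring
  exact RCLike.ofReal_injective h

theorem isUnit_one_sub_of_mem_skewAdjoint {S : Matrix ι ι 𝕜}
    (hS : S ∈ skewAdjoint (Matrix ι ι 𝕜)) : IsUnit (1 - S) := by
  refine IsArtinianRing.isUnit_iff_isRightRegular.2 (isRightRegular_of_non_zero_divisor _ ?_)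
  intro M hM
  have h := frobenius_norm_mul_one_sub_skewAdjoint_sq hS M
  rw [hM, norm_zero] at h
  exact norm_eq_zero.1 (by nlinarith [norm_nonneg M, sq_nonneg ‖M * S‖])

theorem frobenius_norm_mul_inv_one_sub_le {S : Matrix ι ι 𝕜}
    (hS : S ∈ skewAdjoint (Matrix ι ι 𝕜)) (M : Matrix m ι 𝕜) : ‖M * (1 - S)⁻¹‖ ≤ ‖M‖ := by
  have h := frobenius_norm_mul_one_sub_skewAdjoint_sq hS (M * (1 - S)⁻¹)
  have hdet := (isUnit_iff_isUnit_det _).1 (isUnit_one_sub_of_mem_skewAdjoint hS)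
  rw [nonsing_inv_mul_cancel_right _ _ hdet] at h
  rw [← sq_le_sq₀ (norm_nonneg _) (norm_nonneg _), h]
  exact le_add_of_nonneg_right (sq_nonneg _)

theorem frobenius_norm_inv_one_sub_mul_le {S : Matrix ι ι 𝕜}
    (hS : S ∈ skewAdjoint (Matrix ι ι 𝕜)) (M : Matrix ι n 𝕜) : ‖(1 - S)⁻¹ * M‖ ≤ ‖M‖ := by
  have hS' : Sᴴ = -S := hS
  have hstar : (1 - S)ᴴ = 1 - -S := by rw [conjTranspose_sub, conjTranspose_one, hS']
  rw [← frobenius_norm_conjTranspose, conjTranspose_mul, conjTranspose_nonsing_inv, hstar,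
    ← frobenius_norm_conjTranspose M]
  exact frobenius_norm_mul_inv_one_sub_le (neg_mem hS) Mᴴ

end Frobenius

section Cayley

open scoped Matrix.Norms.Frobenius

variable {ι 𝕜 : Type*} [Fintype ι] [DecidableEq ι] [RCLike 𝕜]

/-- The Cayley transform `(1 + S)(1 - S)⁻¹`, a rational substitute for the exponential map from
skew-adjoint to unitary matrices. -/
def cayley (S : Matrix ι ι 𝕜) : Matrix ι ι 𝕜 :=
  (1 + S) * (1 - S)⁻¹

/-- The inverse Cayley transform `(z - 1)(z + 1)⁻¹`; it is only meaningful when `z + 1` is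
invertible. -/
def cayleyInv (z : Matrix ι ι 𝕜) : Matrix ι ι 𝕜 :=
  (z - 1) * (z + 1)⁻¹

theorem cayley_zero : cayley (0 : Matrix ι ι 𝕜) = 1 := by simp [cayley]

theorem cayley_mem_unitaryGroup {S : Matrix ι ι 𝕜} (hS : S ∈ skewAdjoint (Matrix ι ι 𝕜)) :
    cayley S ∈ unitaryGroup ι 𝕜 := by
  have hdet := (isUnit_iff_isUnit_det _).1 (isUnit_one_sub_of_mem_skewAdjoint hS)
  have hdet' : IsUnit (1 + S).det := by
    simpa using (isUnit_iff_isUnit_det _).1 (isUnit_one_sub_of_mem_skewAdjoint (neg_mem hS))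
  have hS' : Sᴴ = -S := hS
  have hcomm : (1 - S) * (1 + S) = (1 + S) * (1 - S) := by noncomm_ring
  have hstar : (cayley S)ᴴ = (1 + S)⁻¹ * (1 - S) := by
    rw [cayley, conjTranspose_mul, conjTranspose_nonsing_inv]
    simp [hS', sub_eq_add_neg]
  rw [mem_unitaryGroup_iff', star_eq_conjTranspose, hstar, cayley, Matrix.mul_assoc,
    ← Matrix.mul_assoc (1 - S), hcomm, mul_nonsing_inv_cancel_right _ _ hdet,
    nonsing_inv_mul _ hdet']

theorem cayley_mem_specialOrthogonalGroup {S : Matrix ι ι ℝ}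
    (hS : S ∈ skewAdjoint (Matrix ι ι ℝ)) : cayley S ∈ specialOrthogonalGroup ι ℝ := by
  refine mem_specialOrthogonalGroup_iff.2 ⟨cayley_mem_unitaryGroup hS, ?_⟩
  have hdet := (isUnit_iff_isUnit_det _).1 (isUnit_one_sub_of_mem_skewAdjoint hS)
  have hS' : Sᵀ = -S := hS
  have hadd : (1 + S).det = (1 - S).det := by
    rw [← det_transpose, transpose_add, transpose_one, hS', sub_eq_add_neg]
  rw [cayley, det_mul, det_nonsing_inv, hadd, Ring.mul_inverse_cancel _ hdet]

theorem cayley_sub_cayley {S T : Matrix ι ι 𝕜} (hS : IsUnit (1 - S)) (hT : IsUnit (1 - T)) :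
    cayley S - cayley T = (2 : 𝕜) • ((1 - S)⁻¹ * (S - T) * (1 - T)⁻¹) := by
  have hresolvent {R : Matrix ι ι 𝕜} (hR : IsUnit (1 - R)) :
      cayley R = (2 : 𝕜) • (1 - R)⁻¹ - 1 := by
    have hsplit : 1 + R = (2 : 𝕜) • 1 - (1 - R) := by rw [two_smul]; abel
    rw [cayley, hsplit, Matrix.sub_mul, mul_nonsing_inv _ ((isUnit_iff_isUnit_det _).1 hR),
      Matrix.smul_mul, Matrix.one_mul]
  rw [hresolvent hS, hresolvent hT, sub_sub_sub_cancel_right, ← smul_sub,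
    Matrix.inv_sub_inv (by simp [hS, hT]), show 1 - T - (1 - S) = S - T by abel]

theorem norm_cayley_sub_cayley_le {S T : Matrix ι ι 𝕜} (hS : S ∈ skewAdjoint (Matrix ι ι 𝕜))
    (hT : T ∈ skewAdjoint (Matrix ι ι 𝕜)) : ‖cayley S - cayley T‖ ≤ 2 * ‖S - T‖ := by
  rw [cayley_sub_cayley (isUnit_one_sub_of_mem_skewAdjoint hS)
    (isUnit_one_sub_of_mem_skewAdjoint hT), norm_smul, RCLike.norm_ofNat]
  gcongr
  exact (frobenius_norm_mul_inv_one_sub_le hT _).trans (frobenius_norm_inv_one_sub_mul_le hS _)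

theorem isUnit_add_one_of_norm_one_sub_lt_two {z : Matrix ι ι 𝕜} (hz : ‖1 - z‖ < 2) :
    IsUnit (z + 1) := by
  have hhalf : ‖(2⁻¹ : 𝕜) • (1 - z)‖ < 1 := by
    rw [norm_smul, norm_inv, RCLike.norm_ofNat]; linarith
  have h : z + 1 = (2 : 𝕜) • (1 - (2⁻¹ : 𝕜) • (1 - z)) := by module
  rw [h]
  exact (isUnit_one_sub_of_norm_lt_one hhalf).smul (Units.mk0 (2 : 𝕜) two_ne_zero)

theorem cayleyInv_mem_skewAdjoint {z : Matrix ι ι 𝕜} (hz : z ∈ unitaryGroup ι 𝕜)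
    (hu : IsUnit (z + 1)) : cayleyInv z ∈ skewAdjoint (Matrix ι ι 𝕜) := by
  have hdet := (isUnit_iff_isUnit_det _).1 hu
  have hz₁ : zᴴ * z = 1 := mem_unitaryGroup_iff'.1 hz
  have hdet' : IsUnit (zᴴ + 1).det := by
    have := hdet.star
    rwa [← det_conjTranspose, conjTranspose_add, conjTranspose_one] at this
  have hswap : (zᴴ - 1) * (z + 1) = -((zᴴ + 1) * (z - 1)) := by
    simp only [Matrix.sub_mul, Matrix.add_mul, Matrix.mul_add, Matrix.mul_sub, hz₁,
      Matrix.mul_one, Matrix.one_mul]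
    abel
  rw [skewAdjoint.mem_iff, star_eq_conjTranspose]
  calc (cayleyInv z)ᴴ = (zᴴ + 1)⁻¹ * (zᴴ - 1) := by
        simp [cayleyInv, conjTranspose_nonsing_inv]
    _ = (zᴴ + 1)⁻¹ * ((zᴴ - 1) * (z + 1)) * (z + 1)⁻¹ := by
        rw [← Matrix.mul_assoc, mul_nonsing_inv_cancel_right _ _ hdet]
    _ = -cayleyInv z := by
        rw [hswap, Matrix.mul_neg, nonsing_inv_mul_cancel_left _ _ hdet', Matrix.neg_mul, cayleyInv]

theorem one_sub_cayleyInv {z : Matrix ι ι 𝕜} (hu : IsUnit (z + 1)) :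
    1 - cayleyInv z = (2 : 𝕜) • (z + 1)⁻¹ := by
  have hdet := (isUnit_iff_isUnit_det _).1 hu
  calc 1 - cayleyInv z = (z + 1) * (z + 1)⁻¹ - (z - 1) * (z + 1)⁻¹ := by
        rw [mul_nonsing_inv _ hdet, cayleyInv]
    _ = (2 : 𝕜) • (z + 1)⁻¹ := by
        have htwo : z + 1 - (z - 1) = (2 : 𝕜) • 1 := by module
        rw [← Matrix.sub_mul, htwo, Matrix.smul_mul, Matrix.one_mul]

theorem cayley_cayleyInv {z : Matrix ι ι 𝕜} (hz : z ∈ unitaryGroup ι 𝕜) (hu : IsUnit (z + 1)) :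
    cayley (cayleyInv z) = z := by
  have hskew := cayleyInv_mem_skewAdjoint hz hu
  have hdet := (isUnit_iff_isUnit_det _).1 (isUnit_one_sub_of_mem_skewAdjoint hskew)
  have hadd : 1 + cayleyInv z = z * (1 - cayleyInv z) := by
    calc 1 + cayleyInv z = (z + 1) * (z + 1)⁻¹ + (z - 1) * (z + 1)⁻¹ := by
          rw [mul_nonsing_inv _ ((isUnit_iff_isUnit_det _).1 hu), cayleyInv]
      _ = z * (1 - cayleyInv z) := by
          rw [one_sub_cayleyInv hu, ← Matrix.add_mul, Matrix.mul_smul, ← Matrix.smul_mul]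
          congr 1; module
  rw [cayley, hadd, mul_nonsing_inv_cancel_right _ _ hdet]

theorem norm_cayleyInv_sq_le {z : Matrix ι ι 𝕜} (hz : z ∈ unitaryGroup ι 𝕜) (h : ‖1 - z‖ ≤ 1) :
    (2 * ‖cayleyInv z‖) ^ 2 ≤ ‖1 - z‖ ^ 2 + ‖1 - z‖ ^ 4 := by
  have hu := isUnit_add_one_of_norm_one_sub_lt_two (h.trans_lt one_lt_two)
  have hmul : (z - 1) * (1 - cayleyInv z) = (2 : 𝕜) • cayleyInv z := by
    rw [one_sub_cayleyInv hu, Matrix.mul_smul, cayleyInv]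
  have hid := frobenius_norm_mul_one_sub_skewAdjoint_sq (cayleyInv_mem_skewAdjoint hz hu) (z - 1)
  rw [hmul, norm_smul, RCLike.norm_ofNat, ← norm_sub_rev 1 z] at hid
  have hle : ‖(z - 1) * cayleyInv z‖ ^ 2 ≤ ‖1 - z‖ ^ 2 * ‖cayleyInv z‖ ^ 2 := by
    rw [← mul_pow, norm_sub_rev 1 z]
    gcongr
    exact norm_mul_le _ _
  have hsmall : ‖1 - z‖ ^ 2 ≤ 1 := pow_le_one₀ (norm_nonneg _) h
  have hcayley : ‖cayleyInv z‖ ^ 2 ≤ ‖1 - z‖ ^ 2 := by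
    nlinarith [sq_nonneg ‖cayleyInv z‖]
  nlinarith [sq_nonneg ‖1 - z‖]

end Cayley

section SpecialOrthogonal

open scoped Matrix.Norms.Frobenius

variable {n : ℕ} {a b : Matrix (Fin n) (Fin n) ℝ}

theorem mem_SO_iff : a ∈ SO n ↔ a ∈ specialOrthogonalGroup (Fin n) ℝ := by
  rw [mem_specialOrthogonalGroup_iff, mem_orthogonalGroup_iff]; rfl

theorem mul_mem_SO (ha : a ∈ SO n) (hb : b ∈ SO n) : a * b ∈ SO n :=
  mem_SO_iff.2 (mul_mem (mem_SO_iff.1 ha) (mem_SO_iff.1 hb))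

theorem transpose_mem_SO (ha : a ∈ SO n) : aᵀ ∈ SO n :=
  ⟨by rw [transpose_transpose, mul_eq_one_comm.1 ha.1], by rw [det_transpose, ha.2]⟩

theorem mem_unitaryGroup_of_mem_SO (ha : a ∈ SO n) : a ∈ unitaryGroup (Fin n) ℝ :=
  (mem_specialOrthogonalGroup_iff.1 (mem_SO_iff.1 ha)).1

theorem hsDist_eq_ofReal_norm_sub (a b : Matrix (Fin n) (Fin n) ℝ) :
    hsDist a b = ENNReal.ofReal ‖a - b‖ := by
  have h : ‖a - b‖ ^ 2 = trace ((a - b)ᵀ * (a - b)) := ofReal_frobenius_norm_sq (𝕜 := ℝ) (a - b)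
  rw [hsDist, ← h, Real.sqrt_sq (norm_nonneg _)]

theorem ofReal_norm_sub_le_DSO (a b : Matrix (Fin n) (Fin n) ℝ) :
    ENNReal.ofReal ‖a - b‖ ≤ DSO n a b :=
  hsDist_eq_ofReal_norm_sub a b ▸ le_intrinsicDistE hsDist (SO n) a b

theorem DSO_mul_left_le (ha : a ∈ SO n) (x y : Matrix (Fin n) (Fin n) ℝ) :
    DSO n (a * x) (a * y) ≤ DSO n x y := by
  refine intrinsicDistE_map_le (f := (a * ·)) (by fun_prop) (fun b hb => mul_mem_SO ha hb) ?_ x y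
  intro x y
  simp only [hsDist_eq_ofReal_norm_sub, ← Matrix.mul_sub,
    frobenius_norm_unitary_mul (mem_unitaryGroup_of_mem_SO ha), le_refl]

theorem DSO_mul_right_le (ha : a ∈ SO n) (x y : Matrix (Fin n) (Fin n) ℝ) :
    DSO n (x * a) (y * a) ≤ DSO n x y := by
  refine intrinsicDistE_map_le (f := (· * a)) (by fun_prop) (fun b hb => mul_mem_SO hb ha) ?_ x y
  intro x y
  simp only [hsDist_eq_ofReal_norm_sub, ← Matrix.sub_mul,
    frobenius_norm_mul_unitary (mem_unitaryGroup_of_mem_SO ha), le_refl]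

theorem DSO_one_cayley_le {S : Matrix (Fin n) (Fin n) ℝ}
    (hS : S ∈ skewAdjoint (Matrix (Fin n) (Fin n) ℝ)) :
    DSO n 1 (cayley S) ≤ ENNReal.ofReal (2 * ‖S‖) := by
  set γ : ℝ → Matrix (Fin n) (Fin n) ℝ := fun t => cayley (t • S) with hγ
  have hskew (t : ℝ) : t • S ∈ skewAdjoint (Matrix (Fin n) (Fin n) ℝ) := skewAdjoint.smul_mem t hS
  have hlip (s t : ℝ) : ‖γ s - γ t‖ ≤ 2 * ‖S‖ * |t - s| := by
    refine (norm_cayley_sub_cayley_le (hskew s) (hskew t)).trans_eq ?_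
    rw [← sub_smul, norm_smul, Real.norm_eq_abs, abs_sub_comm]; ring
  have hcont : Continuous γ := by
    refine (LipschitzWith.of_dist_le_mul (K := ⟨2 * ‖S‖, by positivity⟩) fun s t => ?_).continuous
    rw [dist_eq_norm, dist_comm, Real.dist_eq]
    exact hlip s t
  have hlength : pathLengthE hsDist γ ≤ ENNReal.ofReal (2 * ‖S‖) := by
    refine pathLengthE_le_of_lipschitz fun s t hst => ?_
    rw [hsDist_eq_ofReal_norm_sub, ← ENNReal.ofReal_mul (by positivity),
      ← abs_of_nonneg (sub_nonneg.2 hst)]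
    exact ENNReal.ofReal_le_ofReal (hlip s t)
  have h := intrinsicDistE_le_pathLengthE hsDist hcont.continuousOn
    fun t _ => mem_SO_iff.2 (cayley_mem_specialOrthogonalGroup (hskew t))
  simp only [hγ, zero_smul, one_smul, cayley_zero] at h
  exact h.trans hlength

theorem DSO_one_sq_le {z : Matrix (Fin n) (Fin n) ℝ} (hz : z ∈ SO n) (h : ‖1 - z‖ ≤ 1) :
    DSO n 1 z ^ 2 ≤ ENNReal.ofReal (‖1 - z‖ ^ 2 + ‖1 - z‖ ^ 4) := by
  have hzu := mem_unitaryGroup_of_mem_SO hz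
  have hu := isUnit_add_one_of_norm_one_sub_lt_two (h.trans_lt one_lt_two)
  calc DSO n 1 z ^ 2 = DSO n 1 (cayley (cayleyInv z)) ^ 2 := by rw [cayley_cayleyInv hzu hu]
    _ ≤ ENNReal.ofReal (2 * ‖cayleyInv z‖) ^ 2 := by
        gcongr; exact DSO_one_cayley_le (cayleyInv_mem_skewAdjoint hzu hu)
    _ ≤ ENNReal.ofReal (‖1 - z‖ ^ 2 + ‖1 - z‖ ^ 4) := by
        rw [← ENNReal.ofReal_pow (by positivity)]
        exact ENNReal.ofReal_le_ofReal (norm_cayleyInv_sq_le hzu h)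

end SpecialOrthogonal

section Rotation

open scoped Matrix.Norms.Frobenius

variable {n : ℕ} {i j : Fin n}

/-- The orthogonal projection onto the plane spanned by `e_i` and `e_j`, for `i ≠ j`. -/
def planeProj (i j : Fin n) : Matrix (Fin n) (Fin n) ℝ :=
  Matrix.single i i 1 + Matrix.single j j 1

/-- The infinitesimal generator of the rotations `kacRot i j`: the quarter turn `e_i ↦ e_j`,
`e_j ↦ -e_i` of the plane, extended by zero. -/
def planeGen (i j : Fin n) : Matrix (Fin n) (Fin n) ℝ :=
  Matrix.single j i 1 - Matrix.single i j 1

theorem kacRot_eq (hij : i ≠ j) (θ : ℝ) :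
    kacRot i j θ = 1 + (Real.cos θ - 1) • planeProj i j + Real.sin θ • planeGen i j := by
  ext k l
  simp only [kacRot, planeProj, planeGen, Matrix.of_apply, Matrix.add_apply, Matrix.smul_apply,
    Matrix.sub_apply, Matrix.single_apply, Matrix.one_apply, smul_eq_mul]
  grind

theorem planeProj_mul_planeProj (hij : i ≠ j) :
    planeProj i j * planeProj i j = planeProj i j := by
  simp [planeProj, Matrix.add_mul, Matrix.mul_add, hij, hij.symm]

theorem planeProj_mul_planeGen (hij : i ≠ j) : planeProj i j * planeGen i j = planeGen i j := by
  simp [planeProj, planeGen, Matrix.add_mul, Matrix.mul_sub, hij, hij.symm]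

theorem planeGen_mul_planeProj (hij : i ≠ j) : planeGen i j * planeProj i j = planeGen i j := by
  simp [planeProj, planeGen, Matrix.sub_mul, Matrix.mul_add, hij, hij.symm,
    ← sub_eq_add_neg]

theorem planeGen_mul_planeGen (hij : i ≠ j) : planeGen i j * planeGen i j = -planeProj i j := by
  simp [planeProj, planeGen, Matrix.sub_mul, Matrix.mul_sub, hij, hij.symm, ← neg_add',
    -neg_add_rev]

theorem kacRot_add (hij : i ≠ j) (θ φ : ℝ) :
    kacRot i j (θ + φ) = kacRot i j θ * kacRot i j φ := by
  simp only [kacRot_eq hij, Matrix.add_mul, Matrix.mul_add, Matrix.one_mul, Matrix.mul_one,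
    Matrix.smul_mul, Matrix.mul_smul, planeProj_mul_planeProj hij, planeProj_mul_planeGen hij,
    planeGen_mul_planeProj hij, planeGen_mul_planeGen hij, Real.cos_add, Real.sin_add]
  module

theorem kacRot_zero (hij : i ≠ j) : kacRot i j 0 = 1 := by simp [kacRot_eq hij]

theorem transpose_kacRot (hij : i ≠ j) (θ : ℝ) : (kacRot i j θ)ᵀ = kacRot i j (-θ) := by
  simp only [kacRot_eq hij, planeProj, planeGen, Real.cos_neg, Real.sin_neg, transpose_add,
    transpose_sub, transpose_smul, transpose_one, transpose_single]
  module

-- The determinant is `1` because `kacRot i j θ` is the square of `kacRot i j (θ / 2)`.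
theorem kacRot_mem_SO (hij : i ≠ j) (θ : ℝ) : kacRot i j θ ∈ SO n := by
  have hortho (θ : ℝ) : kacRot i j θ * (kacRot i j θ)ᵀ = 1 := by
    rw [transpose_kacRot hij, ← kacRot_add hij, add_neg_cancel, kacRot_zero hij]
  refine ⟨hortho θ, ?_⟩
  have hdet := congrArg det (hortho (θ / 2))
  rwa [det_mul, det_transpose, det_one, ← det_mul, ← kacRot_add hij, add_halves] at hdet

theorem kacRot_periodic (i j : Fin n) : Function.Periodic (kacRot i j) (2 * Real.pi) := by
  intro θ; simp [kacRot]

theorem measurable_kacRot_mul (i j : Fin n) (x : Matrix (Fin n) (Fin n) ℝ) :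
    Measurable fun θ => kacRot i j θ * x := by
  refine measurable_pi_iff.2 fun k => measurable_pi_iff.2 fun l => ?_
  simp only [mul_apply]
  refine Finset.measurable_sum _ fun m _ => Measurable.mul_const ?_ _
  simp only [kacRot, of_apply]
  split_ifs <;> fun_prop

theorem trace_kacRot_mul (hij : i ≠ j) (θ : ℝ) (z : Matrix (Fin n) (Fin n) ℝ) :
    trace (kacRot i j θ * z) =
      trace z + (Real.cos θ - 1) * (z i i + z j j) + Real.sin θ * (z i j - z j i) := by
  simp [kacRot_eq hij, planeProj, planeGen, Matrix.add_mul, Matrix.sub_mul, trace_single_mul]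
  ring

theorem norm_one_sub_kacRot_mul_sq (hij : i ≠ j) {z : Matrix (Fin n) (Fin n) ℝ} (hz : z ∈ SO n)
    (θ : ℝ) :
    ‖1 - kacRot i j θ * z‖ ^ 2 = ‖1 - z‖ ^ 2 + 2 * (1 - Real.cos θ) * (z i i + z j j) -
      2 * Real.sin θ * (z i j - z j i) := by
  rw [frobenius_norm_one_sub_unitary_sq (mem_unitaryGroup_of_mem_SO hz),
    frobenius_norm_one_sub_unitary_sq
      (mem_unitaryGroup_of_mem_SO (mul_mem_SO (kacRot_mem_SO hij θ) hz)), trace_kacRot_mul hij]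
  simp only [RCLike.re_to_real]
  ring

theorem sq_sub_pow_four_div_six_le_mul_sin (x : ℝ) : x ^ 2 - x ^ 4 / 6 ≤ x * Real.sin x := by
  have habs : x * (x - Real.sin x) ≤ |x| * (|x| ^ 3 / 6) :=
    (le_abs_self _).trans (by rw [abs_mul]; gcongr; exact Real.abs_sub_sin_le x)
  have hpow : |x| * |x| ^ 3 = x ^ 4 := by rw [← pow_succ', Even.pow_abs (by decide)]
  linarith

/-- Half the `(i, j)` entry of the skew part of `z`: to leading order, the rotation angle in the
`(i, j)` plane that brings `z` closest to the identity. -/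
def kacAngle (z : Matrix (Fin n) (Fin n) ℝ) (i j : Fin n) : ℝ :=
  (z i j - z j i) / 2

theorem norm_one_sub_kacRot_kacAngle_mul_sq_le (hij : i ≠ j) {z : Matrix (Fin n) (Fin n) ℝ}
    (hz : z ∈ SO n) :
    ‖1 - kacRot i j (kacAngle z i j) * z‖ ^ 2 ≤
      ‖1 - z‖ ^ 2 - 2 * kacAngle z i j ^ 2 + kacAngle z i j ^ 4 := by
  have hdiag (k : Fin n) : z k k ≤ 1 :=
    (le_abs_self _).trans (entry_norm_bound_of_unitary (mem_unitaryGroup_of_mem_SO hz) k k)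
  rw [norm_one_sub_kacRot_mul_sq hij hz, show z i j - z j i = 2 * kacAngle z i j by
    rw [kacAngle]; ring]
  set w := kacAngle z i j
  have hcos := Real.one_sub_sq_div_two_le_cos (x := w)
  have hplane : (1 - Real.cos w) * (z i i + z j j) ≤ w ^ 2 / 2 * 2 :=
    mul_le_mul_of_nonneg (by linarith) (by linarith [hdiag i, hdiag j])
      (by linarith [Real.cos_le_one w]) zero_le_two
  have hsin := sq_sub_pow_four_div_six_le_mul_sin w
  linarith [sq_nonneg (w ^ 2)]

end Rotation

section Pairs

open scoped Matrix.Norms.Frobenius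

variable {n : ℕ}

theorem ne_of_mem_pairs {p : Fin n × Fin n} (hp : p ∈ pairs n) : p.1 ≠ p.2 :=
  (Finset.mem_filter.1 hp).2.ne

theorem card_pairs (n : ℕ) : (pairs n).card = n.choose 2 := by
  rw [pairs, Fintype.card_product_filter_lt, Fintype.card_fin]

theorem sum_sum_eq_two_nsmul_sum_pairs {M : Type*} [AddCommMonoid M] {f : Fin n → Fin n → M}
    (hsymm : ∀ i j, f i j = f j i) (hdiag : ∀ i, f i i = 0) :
    ∑ i, ∑ j, f i j = 2 • ∑ p ∈ pairs n, f p.1 p.2 := by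
  have hsplit (i j : Fin n) :
      f i j = (if i < j then f i j else 0) + if j < i then f j i else 0 := by
    rcases lt_trichotomy i j with h | rfl | h
    · simp [h, h.not_gt]
    · simp [hdiag]
    · simp [h, h.not_gt, hsymm i j]
  have hupper : ∑ p ∈ pairs n, f p.1 p.2 = ∑ i, ∑ j, if i < j then f i j else 0 := by
    rw [pairs, Finset.sum_filter, Fintype.sum_prod_type]
  calc ∑ i, ∑ j, f i j
      = ∑ i, ∑ j, ((if i < j then f i j else 0) + if j < i then f j i else 0) :=
        Finset.sum_congr rfl fun i _ => Finset.sum_congr rfl fun j _ => hsplit i j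
    _ = 2 • ∑ p ∈ pairs n, f p.1 p.2 := by
        simp only [Finset.sum_add_distrib]
        rw [Finset.sum_comm (f := fun i j => if j < i then f j i else 0), hupper, two_nsmul]

theorem norm_sub_transpose_sq_eq_sum_kacAngle_sq (z : Matrix (Fin n) (Fin n) ℝ) :
    ‖z - zᵀ‖ ^ 2 = 4 * ∑ p ∈ pairs n, 2 * kacAngle z p.1 p.2 ^ 2 := by
  have hentry (i j : Fin n) : ‖(z - zᵀ) i j‖ ^ 2 = 4 * kacAngle z i j ^ 2 := by
    rw [Matrix.sub_apply, transpose_apply, Real.norm_eq_abs, sq_abs, kacAngle]; ring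
  simp only [frobenius_norm_sq_eq_sum, hentry]
  have hsymm (i j : Fin n) : 4 * kacAngle z i j ^ 2 = 4 * kacAngle z j i ^ 2 := by
    simp only [kacAngle]; ring
  rw [sum_sum_eq_two_nsmul_sum_pairs hsymm (by simp [kacAngle]), nsmul_eq_mul, ← Finset.mul_sum,
    ← Finset.mul_sum]
  push_cast; ring

theorem sum_kacAngle_sq_le {z : Matrix (Fin n) (Fin n) ℝ} (hz : z ∈ SO n) :
    ∑ p ∈ pairs n, 2 * kacAngle z p.1 p.2 ^ 2 ≤ ‖1 - z‖ ^ 2 := by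
  have h := frobenius_norm_unitary_sub_conjTranspose_sq (mem_unitaryGroup_of_mem_SO hz)
  rw [conjTranspose_eq_transpose_of_trivial, norm_sub_transpose_sq_eq_sum_kacAngle_sq] at h
  linarith [sq_nonneg ‖(1 - z)ᴴ * (1 - z)‖]

theorem le_sum_kacAngle_sq {z : Matrix (Fin n) (Fin n) ℝ} (hz : z ∈ SO n) :
    ‖1 - z‖ ^ 2 - ‖1 - z‖ ^ 4 / 4 ≤ ∑ p ∈ pairs n, 2 * kacAngle z p.1 p.2 ^ 2 := by
  have h := frobenius_norm_unitary_sub_conjTranspose_sq (mem_unitaryGroup_of_mem_SO hz)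
  rw [conjTranspose_eq_transpose_of_trivial, norm_sub_transpose_sq_eq_sum_kacAngle_sq] at h
  have hherm : ‖(1 - z)ᴴ * (1 - z)‖ ^ 2 ≤ ‖1 - z‖ ^ 4 := by
    calc ‖(1 - z)ᴴ * (1 - z)‖ ^ 2 ≤ (‖(1 - z)ᴴ‖ * ‖1 - z‖) ^ 2 := by
          gcongr; exact norm_mul_le _ _
      _ = ‖1 - z‖ ^ 4 := by rw [frobenius_norm_conjTranspose]; ring
  linarith

end Pairs

section Coupling

variable {Ω X : Type*} [MeasurableSpace Ω] [MeasurableSpace X]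

theorem IsCoupling.map_prodMk (μ : Measure Ω) {f g : Ω → X} (hf : Measurable f)
    (hg : Measurable g) : IsCoupling (μ.map fun ω => (f ω, g ω)) (μ.map f) (μ.map g) :=
  ⟨Measure.map_map measurable_fst (hf.prodMk hg), Measure.map_map measurable_snd (hf.prodMk hg)⟩

theorem IsCoupling.smul {η : Measure (X × X)} {μ ν : Measure X} (h : IsCoupling η μ ν)
    (c : ℝ≥0∞) : IsCoupling (c • η) (c • μ) (c • ν) :=
  ⟨by rw [Measure.map_smul, h.1], by rw [Measure.map_smul, h.2]⟩

theorem IsCoupling.sum {ι : Type*} {s : Finset ι} {η : ι → Measure (X × X)}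
    {μ ν : ι → Measure X} (h : ∀ i ∈ s, IsCoupling (η i) (μ i) (ν i)) :
    IsCoupling (∑ i ∈ s, η i) (∑ i ∈ s, μ i) (∑ i ∈ s, ν i) :=
  ⟨by rw [Measure.map_finset_sum measurable_fst.aemeasurable,
      Finset.sum_congr rfl fun i hi => (h i hi).1],
    by rw [Measure.map_finset_sum measurable_snd.aemeasurable,
      Finset.sum_congr rfl fun i hi => (h i hi).2]⟩

theorem wassersteinE_smul_sum_map_le {ι : Type*} (s : Finset ι) (c : ℝ≥0∞) (μ : Measure Ω)
    {f g : ι → Ω → X} (hf : ∀ i, Measurable (f i)) (hg : ∀ i, Measurable (g i))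
    (d : X → X → ℝ≥0∞) {p : ℝ} (hp : 0 ≤ p) :
    wassersteinE d p (c • ∑ i ∈ s, μ.map (f i)) (c • ∑ i ∈ s, μ.map (g i)) ≤
      (c * ∑ i ∈ s, ∫⁻ ω, d (f i ω) (g i ω) ^ p ∂μ) ^ (1 / p) := by
  refine iInf₂_le_of_le _
    ((IsCoupling.sum fun i _ => IsCoupling.map_prodMk μ (hf i) (hg i)).smul c) ?_
  rw [lintegral_smul_measure, lintegral_finsetSum_measure, smul_eq_mul]
  gcongr with i
  exact lintegral_map_le _ _

theorem map_restrict_Ioc_eq_of_periodic {g : ℝ → X} {T : ℝ} (hT : 0 < T) (hg : Measurable g)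
    (hper : Function.Periodic g T) (a b : ℝ) :
    (volume.restrict (Set.Ioc a (a + T))).map g = (volume.restrict (Set.Ioc b (b + T))).map g := by
  ext s hs
  simp only [Measure.map_apply hg hs, Measure.restrict_apply (hg hs)]
  refine (isAddFundamentalDomain_Ioc hT a).measure_set_eq (isAddFundamentalDomain_Ioc hT b) (hg hs)
    fun k => ?_
  ext θ
  simp only [Set.mem_preimage, hper.map_vadd_zmultiples k θ]

theorem map_add_right_restrict_Ioc (a b φ : ℝ) :
    (volume.restrict (Set.Ioc a b)).map (· + φ) = volume.restrict (Set.Ioc (a + φ) (b + φ)) := by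
  have h := (measurePreserving_add_right volume φ).restrict_preimage
    (measurableSet_Ioc (a := a + φ) (b := b + φ))
  rw [Set.preimage_add_const_Ioc, add_sub_cancel_right, add_sub_cancel_right] at h
  exact h.map_eq

theorem uniformAngle_map_comp_add_right {g : ℝ → X} (hg : Measurable g)
    (hper : Function.Periodic g (2 * Real.pi)) (φ : ℝ) :
    uniformAngle.map (fun θ => g (θ + φ)) = uniformAngle.map g := by
  have hcomp := Measure.map_map (μ := volume.restrict (Set.Ioc 0 (2 * Real.pi))) hg
    (measurable_add_const φ)
  rw [map_add_right_restrict_Ioc, zero_add, add_comm (2 * Real.pi),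
    map_restrict_Ioc_eq_of_periodic Real.two_pi_pos hg hper φ 0, zero_add] at hcomp
  rw [uniformAngle, ← Measure.restrict_congr_set Ioc_ae_eq_Icc, Measure.map_smul,
    Measure.map_smul, hcomp]
  rfl

theorem uniformAngle_univ : uniformAngle Set.univ = 1 := by
  rw [uniformAngle, Measure.smul_apply, Measure.restrict_apply_univ, Real.volume_Icc, sub_zero,
    smul_eq_mul]
  exact ENNReal.inv_mul_cancel (by simp [Real.pi_pos]) ENNReal.ofReal_ne_top

end Coupling

section Contraction

open scoped Matrix.Norms.Frobenius

variable {n : ℕ} {x y z : Matrix (Fin n) (Fin n) ℝ}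

theorem kacKernel_eq_smul_sum_map_add (y : Matrix (Fin n) (Fin n) ℝ) (φ : Fin n × Fin n → ℝ) :
    kacKernel n y = (n.choose 2 : ℝ≥0∞)⁻¹ •
      ∑ p ∈ pairs n, uniformAngle.map fun θ => kacRot p.1 p.2 (θ + φ p) * y := by
  rw [kacKernel]
  congr 1
  refine Finset.sum_congr rfl fun p _ => ?_
  exact (uniformAngle_map_comp_add_right (measurable_kacRot_mul p.1 p.2 y)
    (fun θ => congrArg (· * y) (kacRot_periodic p.1 p.2 θ)) (φ p)).symm

-- The two walks use the same plane, and `y` is rotated by an extra angle `φ` in that plane.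
theorem wassersteinE_kacKernel_le (x y : Matrix (Fin n) (Fin n) ℝ) (φ : Fin n × Fin n → ℝ)
    {q : ℝ} (hq : 0 ≤ q) :
    wassersteinE (DSO n) q (kacKernel n x) (kacKernel n y) ≤
      ((n.choose 2 : ℝ≥0∞)⁻¹ *
        ∑ p ∈ pairs n, DSO n x (kacRot p.1 p.2 (φ p) * y) ^ q) ^ (1 / q) := by
  rw [kacKernel_eq_smul_sum_map_add y φ, kacKernel]
  have hmeas (p : Fin n × Fin n) : Measurable fun θ => kacRot p.1 p.2 (θ + φ p) * y :=
    (measurable_kacRot_mul p.1 p.2 y).comp (measurable_add_const (φ p))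
  refine (wassersteinE_smul_sum_map_le (pairs n) (n.choose 2 : ℝ≥0∞)⁻¹ uniformAngle
    (fun p => measurable_kacRot_mul p.1 p.2 x) hmeas (DSO n) hq).trans ?_
  gcongr with p hp
  have hij := ne_of_mem_pairs hp
  have hcost (θ : ℝ) : DSO n (kacRot p.1 p.2 θ * x) (kacRot p.1 p.2 (θ + φ p) * y) ^ q ≤
      DSO n x (kacRot p.1 p.2 (φ p) * y) ^ q := by
    rw [kacRot_add hij, Matrix.mul_assoc]
    gcongr
    exact DSO_mul_left_le (kacRot_mem_SO hij θ) _ _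
  refine (lintegral_mono hcost).trans_eq ?_
  rw [lintegral_const, uniformAngle_univ, mul_one]

theorem wassersteinE_kacKernel_le_DSO (hn : 2 ≤ n) (x y : Matrix (Fin n) (Fin n) ℝ) {q : ℝ}
    (hq : 0 < q) : wassersteinE (DSO n) q (kacKernel n x) (kacKernel n y) ≤ DSO n x y := by
  have hchoose : (n.choose 2 : ℝ≥0∞) ≠ 0 := by exact_mod_cast (Nat.choose_pos hn).ne'
  have hsum : ∑ p ∈ pairs n, DSO n x (kacRot p.1 p.2 0 * y) ^ q = n.choose 2 * DSO n x y ^ q := by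
    rw [Finset.sum_congr rfl fun p hp => by rw [kacRot_zero (ne_of_mem_pairs hp), Matrix.one_mul],
      Finset.sum_const, card_pairs, nsmul_eq_mul]
  refine (wassersteinE_kacKernel_le x y (fun _ => 0) hq.le).trans_eq ?_
  rw [hsum, ENNReal.inv_mul_cancel_left' (by simp [hchoose]) (by simp), one_div,
    ENNReal.rpow_rpow_inv hq.ne']

theorem norm_one_sub_mul_transpose (hx : x ∈ SO n) (y : Matrix (Fin n) (Fin n) ℝ) :
    ‖1 - y * xᵀ‖ = ‖x - y‖ := by
  rw [← hx.1, ← Matrix.sub_mul,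
    frobenius_norm_mul_unitary (mem_unitaryGroup_of_mem_SO (transpose_mem_SO hx))]

theorem DSO_le_DSO_one_mul_transpose (hx : x ∈ SO n) (y : Matrix (Fin n) (Fin n) ℝ) :
    DSO n x y ≤ DSO n 1 (y * xᵀ) := by
  have h := DSO_mul_right_le hx 1 (y * xᵀ)
  rwa [Matrix.one_mul, Matrix.mul_assoc, mul_eq_one_comm.1 hx.1, Matrix.mul_one] at h

theorem two_mul_kacAngle_sq_le (hz : z ∈ SO n) {p : Fin n × Fin n} (hp : p ∈ pairs n) :
    2 * kacAngle z p.1 p.2 ^ 2 ≤ ‖1 - z‖ ^ 2 :=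
  (Finset.single_le_sum (f := fun p : Fin n × Fin n => 2 * kacAngle z p.1 p.2 ^ 2)
    (fun _ _ => by positivity) hp).trans (sum_kacAngle_sq_le hz)

theorem DSO_one_kacRot_kacAngle_mul_sq_le (hz : z ∈ SO n) (h : ‖1 - z‖ ≤ 1) {p : Fin n × Fin n}
    (hp : p ∈ pairs n) :
    DSO n 1 (kacRot p.1 p.2 (kacAngle z p.1 p.2) * z) ^ 2 ≤
      ENNReal.ofReal (‖1 - z‖ ^ 2 - 2 * kacAngle z p.1 p.2 ^ 2 + 2 * ‖1 - z‖ ^ 4) := by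
  have hij := ne_of_mem_pairs hp
  have hrot := norm_one_sub_kacRot_kacAngle_mul_sq_le hij hz
  have hangle := two_mul_kacAngle_sq_le hz hp
  set w := kacAngle z p.1 p.2
  set z' := kacRot p.1 p.2 w * z
  have hquartic : w ^ 4 ≤ ‖1 - z‖ ^ 4 := by nlinarith [sq_nonneg w]
  have hsq : ‖1 - z‖ ^ 2 ≤ 1 := pow_le_one₀ (norm_nonneg _) h
  have hcloser : ‖1 - z'‖ ≤ ‖1 - z‖ :=
    (sq_le_sq₀ (norm_nonneg _) (norm_nonneg _)).1 (by nlinarith [sq_nonneg w])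
  refine (DSO_one_sq_le (mul_mem_SO (kacRot_mem_SO hij w) hz) (hcloser.trans h)).trans ?_
  have hcloser4 : ‖1 - z'‖ ^ 4 ≤ ‖1 - z‖ ^ 4 := by gcongr
  exact ENNReal.ofReal_le_ofReal (by linarith)

theorem average_kacAngle_bound_le (hn : 2 ≤ n) (hz : z ∈ SO n) :
    (n.choose 2 : ℝ)⁻¹ *
        ∑ p ∈ pairs n, (‖1 - z‖ ^ 2 - 2 * kacAngle z p.1 p.2 ^ 2 + 2 * ‖1 - z‖ ^ 4) ≤
      (1 - 1 / (n.choose 2 : ℝ)) * ‖1 - z‖ ^ 2 + 4 * ‖1 - z‖ ^ 4 := by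
  have hN : (1 : ℝ) ≤ n.choose 2 := by exact_mod_cast Nat.choose_pos hn
  have hsum := le_sum_kacAngle_sq hz
  have hquartic : ‖1 - z‖ ^ 4 ≤ n.choose 2 * ‖1 - z‖ ^ 4 := le_mul_of_one_le_left (by positivity) hN
  have hmul : n.choose 2 * ((1 - 1 / (n.choose 2 : ℝ)) * ‖1 - z‖ ^ 2 + 4 * ‖1 - z‖ ^ 4) =
      n.choose 2 * ‖1 - z‖ ^ 2 - ‖1 - z‖ ^ 2 + 4 * (n.choose 2 * ‖1 - z‖ ^ 4) := by
    field_simp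
  rw [inv_mul_le_iff₀ (by linarith), hmul]
  simp only [Finset.sum_add_distrib, Finset.sum_sub_distrib, Finset.sum_const, nsmul_eq_mul,
    card_pairs]
  have hnonneg : 0 ≤ ‖1 - z‖ ^ 4 := by positivity
  linarith

theorem average_DSO_one_kacRot_sq_le (hn : 2 ≤ n) (hz : z ∈ SO n) (h : ‖1 - z‖ ≤ 1) :
    (n.choose 2 : ℝ≥0∞)⁻¹ *
        ∑ p ∈ pairs n, DSO n 1 (kacRot p.1 p.2 (kacAngle z p.1 p.2) * z) ^ 2 ≤
      ENNReal.ofReal ((1 - 1 / (n.choose 2 : ℝ)) * ‖1 - z‖ ^ 2 + 4 * ‖1 - z‖ ^ 4) := by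
  have hchoose : (0 : ℝ) < n.choose 2 := by exact_mod_cast Nat.choose_pos hn
  refine le_trans ?_ (ENNReal.ofReal_le_ofReal (average_kacAngle_bound_le hn hz))
  rw [ENNReal.ofReal_mul (by positivity), ENNReal.ofReal_inv_of_pos hchoose,
    ENNReal.ofReal_natCast, ENNReal.ofReal_sum_of_nonneg fun p hp =>
      add_nonneg (sub_nonneg.2 (two_mul_kacAngle_sq_le hz hp)) (by positivity)]
  gcongr with p hp
  exact DSO_one_kacRot_kacAngle_mul_sq_le hz h hp

theorem rpow_half_mul_sq_add_le (a b d : ℝ≥0∞) :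
    (a * d ^ 2 + b ^ 2 * d ^ 4) ^ (1 / 2 : ℝ) ≤ a ^ (1 / 2 : ℝ) * d + b * d ^ 2 := by
  have hsqrt (t : ℝ≥0∞) : (t ^ 2) ^ (1 / 2 : ℝ) = t := by
    rw [← ENNReal.rpow_two, one_div, ENNReal.rpow_rpow_inv two_ne_zero]
  refine (ENNReal.rpow_add_le_add_rpow _ _ (by norm_num) (by norm_num)).trans_eq ?_
  rw [ENNReal.mul_rpow_of_nonneg _ _ (by norm_num), hsqrt,
    show b ^ 2 * d ^ 4 = (b * d ^ 2) ^ 2 by ring, hsqrt]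

theorem one_sub_one_div_choose_two_nonneg (n : ℕ) : 0 ≤ 1 - 1 / (n.choose 2 : ℝ) := by
  rw [one_div]; exact sub_nonneg.2 (Nat.cast_inv_le_one _)

theorem wassersteinE_kacKernel_le_of_norm_sub_le_one (hn : 2 ≤ n) (hx : x ∈ SO n) (hy : y ∈ SO n)
    (h : ‖x - y‖ ≤ 1) :
    wassersteinE (DSO n) 2 (kacKernel n x) (kacKernel n y) ≤
      ENNReal.ofReal √(1 - 1 / (n.choose 2 : ℝ)) * ENNReal.ofReal ‖x - y‖ +
        2 * ENNReal.ofReal ‖x - y‖ ^ 2 := by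
  have hz := mul_mem_SO hy (transpose_mem_SO hx)
  have hρ := one_sub_one_div_choose_two_nonneg n
  rw [← norm_one_sub_mul_transpose hx] at h ⊢
  set z := y * xᵀ with hzdef
  refine (wassersteinE_kacKernel_le x y (fun p => kacAngle z p.1 p.2) zero_le_two).trans ?_
  calc ((n.choose 2 : ℝ≥0∞)⁻¹ * ∑ p ∈ pairs n,
        DSO n x (kacRot p.1 p.2 (kacAngle z p.1 p.2) * y) ^ (2 : ℝ)) ^ (1 / 2 : ℝ)
      ≤ ((n.choose 2 : ℝ≥0∞)⁻¹ * ∑ p ∈ pairs n,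
        DSO n 1 (kacRot p.1 p.2 (kacAngle z p.1 p.2) * z) ^ 2) ^ (1 / 2 : ℝ) := by
        simp only [ENNReal.rpow_two]
        gcongr with p
        exact (DSO_le_DSO_one_mul_transpose hx _).trans_eq (by rw [hzdef, Matrix.mul_assoc])
    _ ≤ ENNReal.ofReal ((1 - 1 / (n.choose 2 : ℝ)) * ‖1 - z‖ ^ 2 + 4 * ‖1 - z‖ ^ 4) ^
        (1 / 2 : ℝ) := by
        gcongr; exact average_DSO_one_kacRot_sq_le hn hz h
    _ = (ENNReal.ofReal (1 - 1 / (n.choose 2 : ℝ)) * ENNReal.ofReal ‖1 - z‖ ^ 2 +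
        2 ^ 2 * ENNReal.ofReal ‖1 - z‖ ^ 4) ^ (1 / 2 : ℝ) := by
        rw [ENNReal.ofReal_add (by positivity) (by positivity), ENNReal.ofReal_mul hρ,
          ENNReal.ofReal_mul zero_le_four, ENNReal.ofReal_pow (norm_nonneg _),
          ENNReal.ofReal_pow (norm_nonneg _), ENNReal.ofReal_ofNat]
        norm_num
    _ ≤ ENNReal.ofReal √(1 - 1 / (n.choose 2 : ℝ)) * ENNReal.ofReal ‖1 - z‖ +
        2 * ENNReal.ofReal ‖1 - z‖ ^ 2 := by
        refine (rpow_half_mul_sq_add_le _ _ _).trans_eq ?_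
        rw [ENNReal.ofReal_rpow_of_nonneg hρ (by norm_num), ← Real.sqrt_eq_rpow]

theorem wassersteinE_kacKernel_le_sqrt_mul_DSO_add (hn : 2 ≤ n) (hx : x ∈ SO n) (hy : y ∈ SO n) :
    wassersteinE (DSO n) 2 (kacKernel n x) (kacKernel n y) ≤
      ENNReal.ofReal √(1 - 1 / (n.choose 2 : ℝ)) * DSO n x y + 2 * DSO n x y ^ 2 := by
  have hnorm := ofReal_norm_sub_le_DSO x y
  rcases le_total 1 ‖x - y‖ with hfar | hclose
  · have hD : 1 ≤ DSO n x y := (ENNReal.one_le_ofReal.2 hfar).trans hnorm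
    calc wassersteinE (DSO n) 2 (kacKernel n x) (kacKernel n y)
        ≤ DSO n x y := wassersteinE_kacKernel_le_DSO hn x y zero_lt_two
      _ ≤ 1 * DSO n x y ^ 2 := by rw [one_mul]; exact le_self_pow₀ hD two_ne_zero
      _ ≤ 2 * DSO n x y ^ 2 := by gcongr; exact one_le_two
      _ ≤ _ := le_add_self
  · refine (wassersteinE_kacKernel_le_of_norm_sub_le_one hn hx hy hclose).trans ?_
    gcongr

theorem ofReal_mul_add_ofReal_mul_sq_le {a b c : ℝ} (ha : 0 ≤ a) (hc : 0 < c) (hab : a ≤ b)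
    {d : ℝ≥0∞} (hd : d ≤ ENNReal.ofReal ((b - a) / c)) :
    ENNReal.ofReal a * d + ENNReal.ofReal c * d ^ 2 ≤ ENNReal.ofReal b * d := by
  calc ENNReal.ofReal a * d + ENNReal.ofReal c * d ^ 2
      ≤ ENNReal.ofReal a * d + ENNReal.ofReal c * (ENNReal.ofReal ((b - a) / c) * d) := by
        rw [sq]; gcongr
    _ = ENNReal.ofReal b * d := by
        rw [← mul_assoc, ← ENNReal.ofReal_mul hc.le, mul_div_cancel₀ _ hc.ne', ← add_mul,
          ← ENNReal.ofReal_add ha (sub_nonneg.2 hab), add_sub_cancel]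

end Contraction

/-- For every `n ≥ 2` there is a constant `c > 0` such that for all `x, y ∈ SO(n)`,
`W_{D,2}(K_x, K_y) ≤ √(1 - 1/C(n,2)) · D(x,y) + c · D(x,y)²`.  In particular the map
`x ↦ K_x` from `(SO(n), D)` to the probability measures with the `W_{D,2}` metric is
locally `√(1 - 1/C(n,2))`-Lipschitz. -/
theorem kac_walk_local_contraction (n : ℕ) (hn : 2 ≤ n) :
    ∃ c : ℝ, 0 < c ∧
      (∀ x ∈ SO n, ∀ y ∈ SO n,
        wassersteinE (DSO n) 2 (kacKernel n x) (kacKernel n y) ≤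
          ENNReal.ofReal (Real.sqrt (1 - 1 / (n.choose 2 : ℝ))) * DSO n x y +
            ENNReal.ofReal c * DSO n x y ^ (2 : ℕ)) ∧
      ∀ x ∈ SO n, ∀ C' : ℝ, Real.sqrt (1 - 1 / (n.choose 2 : ℝ)) < C' →
        ∃ δ : ℝ, 0 < δ ∧ ∀ y ∈ SO n, DSO n x y < ENNReal.ofReal δ →
          wassersteinE (DSO n) 2 (kacKernel n x) (kacKernel n y) ≤
            ENNReal.ofReal C' * DSO n x y := by
  have hbound : ∀ x ∈ SO n, ∀ y ∈ SO n,
      wassersteinE (DSO n) 2 (kacKernel n x) (kacKernel n y) ≤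
        ENNReal.ofReal (Real.sqrt (1 - 1 / (n.choose 2 : ℝ))) * DSO n x y +
          ENNReal.ofReal 2 * DSO n x y ^ (2 : ℕ) := fun x hx y hy => by
    rw [ENNReal.ofReal_ofNat]
    exact wassersteinE_kacKernel_le_sqrt_mul_DSO_add hn hx hy
  refine ⟨2, two_pos, hbound, fun x hx C' hC' => ⟨_, div_pos (sub_pos.2 hC') two_pos,
    fun y hy hlt => (hbound x hx y hy).trans ?_⟩⟩
  exact ofReal_mul_add_ofReal_mul_sq_le (Real.sqrt_nonneg _) two_pos hC'.le hlt.le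

end
end

section
/- Let (M,d) be a Polish length space, p ≥ 1, C > 0, and let P be a Markov transition kernel on M such that (i) P_x has finite p-th moment for every x ∈ M, and (ii) the map x ↦ P_x from (M,d) to (Pr_{d,p}(M), W_{d,p}) is locally C-Lipschitz. Then for every probability measure μ on M with finite p-th moment, μP also has finite p-th moment, and for all such measures μ, ν one has W_{d,p}(μP, νP) ≤ C · W_{d,p}(μ, ν). -/
open MeasureTheory ENNReal Filter Topology Matrix

noncomputable section

/-- `μ` has a finite `p`-th moment with respect to the distance function `d`. -/
def HasFiniteMoment {X : Type*} [MeasurableSpace X] (d : X → X → ℝ≥0∞) (p : ℝ)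
    (μ : Measure X) : Prop :=
  ∃ o : X, ∫⁻ x, d o x ^ p ∂μ < ⊤

/-- `(M, dist)` is a length space: the distance between any two points is the infimum of
the lengths of continuous curves joining them. -/
def IsLengthSpace (M : Type*) [MetricSpace M] : Prop :=
  ∀ x y : M, edist x y =
    ⨅ (γ : ℝ → M) (_ : ContinuousOn γ (Set.Icc 0 1)) (_ : γ 0 = x) (_ : γ 1 = y),
      pathLengthE edist γ

/-- `f : M → N` is locally `C`-Lipschitz with respect to the distance function `dN` on `N`:
for every `x ∈ M`, `limsup_{y → x} dN(f x, f y) / dist(x, y) ≤ C`. -/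
def LocallyLipWith {M N : Type*} [MetricSpace M] (dN : N → N → ℝ≥0∞) (C : ℝ)
    (f : M → N) : Prop :=
  ∀ x : M, Filter.limsup (fun y => dN (f x) (f y) / edist x y) (𝓝[≠] x) ≤ ENNReal.ofReal C

/-!
Along a curve `γ`, the local Lipschitz bound makes `d (f (γ s)) (f (γ t))` at most `C'` times the
length of `γ` between `s` and `t`, for close `s ≤ t` and every `C' > C`. This property passes from
`s ≤ t` and `t ≤ u` to `s ≤ u`, hence holds on the whole curve, so that a locally Lipschitz map on a
length space is globally Lipschitz; in particular `W (P x) (P y) ≤ C * d x y` for all `x` and `y`.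

To pass from points to measures one integrates couplings of `P x` and `P y` against a coupling of
`μ` and `ν`, which would require a measurable choice of the former. On a countable space every
choice is measurable, so `P` is first replaced by `Pₙ x := P (πₙ x)`, where `πₙ` takes countably
many values and moves points by at most `εₙ → 0`. This costs an error `O(εₙ)`, and `μPₙ → μP`
weakly, so the bound survives in the limit because `W` is lower semicontinuous for weak convergence.
-/

open ProbabilityTheory NNReal

theorem rel_of_forall_eventually_nhdsWithin_Icc {α : Type*} [ConditionallyCompleteLinearOrder α]
    [TopologicalSpace α] [OrderTopology α] [DenselyOrdered α] {r : α → α → Prop} {a b : α}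
    (htrans : ∀ ⦃s t u⦄, s ≤ t → t ≤ u → r s t → r t u → r s u)
    (hloc : ∀ t ∈ Set.Icc a b,
      ∀ᶠ s in 𝓝[Set.Icc a b] t, (s ≤ t → r s t) ∧ (t ≤ s → r t s))
    (hab : a ≤ b) : r a b := by
  have ha : r a a := ((hloc a ⟨le_rfl, hab⟩).self_of_nhdsWithin ⟨le_rfl, hab⟩).1 le_rfl
  let S : Set α := {t ∈ Set.Icc a b | r a t}
  have hSI : S ⊆ Set.Icc a b := fun t ht => ht.1
  have haS : a ∈ S := ⟨⟨le_rfl, hab⟩, ha⟩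
  have hlub : IsLUB S (sSup S) := isLUB_csSup ⟨a, haS⟩ ⟨b, fun t ht => (hSI ht).2⟩
  have hcI : sSup S ∈ Set.Icc a b := ⟨hlub.1 haS, hlub.2 fun t ht => (hSI ht).2⟩
  generalize sSup S = c at hlub hcI
  have hac : r a c := by
    have := hlub.nhdsWithin_neBot ⟨a, haS⟩
    obtain ⟨s, hsc, hsS⟩ :=
      (((hloc c hcI).filter_mono (nhdsWithin_mono c hSI)).and
        self_mem_nhdsWithin).exists
    exact htrans hsS.1.1 (hlub.1 hsS) hsS.2 (hsc.1 (hlub.1 hsS))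
  obtain rfl | hcb := hcI.2.eq_or_lt
  · exact hac
  · have : (𝓝[Set.Ioc c b] c).NeBot := by
      rw [nhdsWithin_Ioc_eq_nhdsGT hcb]
      exact nhdsGT_neBot_of_exists_gt ⟨b, hcb⟩
    have hsub : Set.Ioc c b ⊆ Set.Icc a b := fun s hs => ⟨hcI.1.trans hs.1.le, hs.2⟩
    obtain ⟨s, hcs, hs⟩ :=
      (((hloc c hcI).filter_mono (nhdsWithin_mono c hsub)).and self_mem_nhdsWithin).exists
    have hsS : s ∈ S :=
      ⟨hsub hs, htrans hcI.1 hs.1.le hac (hcs.2 hs.1.le)⟩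
    exact absurd (hlub.1 hsS) hs.1.not_ge

theorem edist_le_mul_eVariationOn_of_eventually {α E F : Type*}
    [ConditionallyCompleteLinearOrder α] [TopologicalSpace α] [OrderTopology α]
    [DenselyOrdered α] [PseudoEMetricSpace E] [PseudoEMetricSpace F]
    {f : α → E} {g : α → F} {C : ℝ≥0∞} {a b : α}
    (hloc : ∀ t ∈ Set.Icc a b,
      ∀ᶠ s in 𝓝[Set.Icc a b] t, edist (f t) (f s) ≤ C * edist (g t) (g s))
    (hab : a ≤ b) : edist (f a) (f b) ≤ C * eVariationOn g (Set.Icc a b) := by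
  have hvar : ∀ ⦃s t : α⦄, s ≤ t → edist (g s) (g t) ≤ eVariationOn g (Set.Icc s t) :=
    fun s t hst => eVariationOn.edist_le g (Set.left_mem_Icc.2 hst) (Set.right_mem_Icc.2 hst)
  refine rel_of_forall_eventually_nhdsWithin_Icc
    (r := fun s t => edist (f s) (f t) ≤ C * eVariationOn g (Set.Icc s t))
    (fun s t u hst htu h₁ h₂ => ?_) (fun t ht => ?_) hab
  · calc edist (f s) (f u) ≤ edist (f s) (f t) + edist (f t) (f u) := edist_triangle _ _ _
      _ ≤ C * eVariationOn g (Set.Icc s t) + C * eVariationOn g (Set.Icc t u) :=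
        add_le_add h₁ h₂
      _ = C * eVariationOn g (Set.Icc s u) := by
        simpa [mul_add] using
          congrArg (C * ·) (eVariationOn.Icc_add_Icc g hst htu (Set.mem_univ t))
  · filter_upwards [hloc t ht] with s hs
    refine ⟨fun hst => ?_, fun hts => hs.trans (by gcongr; exact hvar hts)⟩
    rw [edist_comm]
    exact hs.trans (by rw [edist_comm]; gcongr; exact hvar hst)

theorem sum_range_le_pathLengthE {X : Type*} (d : X → X → ℝ≥0∞) (γ : ℝ → X) {t : ℕ → ℝ}
    (ht : Monotone t) (h₀ : t 0 = 0) {n : ℕ} (h₁ : t n = 1) :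
    ∑ i ∈ Finset.range n, d (γ (t i)) (γ (t (i + 1))) ≤ pathLengthE d γ := by
  rw [← Fin.sum_univ_eq_sum_range fun i => d (γ (t i)) (γ (t (i + 1)))]
  exact le_iSup_of_le n <| le_iSup_of_le (fun i => t i) <|
    le_iSup_of_le (fun i j hij => ht hij) <| le_iSup_of_le h₀ <| le_iSup_of_le h₁ le_rfl

theorem eVariationOn_le_pathLengthE {E : Type*} [PseudoEMetricSpace E] (γ : ℝ → E) :
    eVariationOn γ (Set.Icc 0 1) ≤ pathLengthE edist γ := by
  refine iSup_le fun ⟨n, u, hu, hmem⟩ => ?_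
  let t : ℕ → ℝ
    | 0 => 0
    | i + 1 => if i ≤ n then u i else 1
  have ht : Monotone t := by
    refine monotone_nat_of_le_succ fun i => ?_
    rcases i with _ | i
    · simpa [t] using (hmem 0).1
    · simp only [t]
      split_ifs with h₁ h₂
      exacts [hu i.le_succ, (hmem i).2, by omega, le_rfl]
  calc ∑ i ∈ Finset.range n, edist (γ (u (i + 1))) (γ (u i))
      = ∑ i ∈ Finset.range n, edist (γ (t (i + 1))) (γ (t (i + 1 + 1))) := by
        refine Finset.sum_congr rfl fun i hi => ?_
        have hi := Finset.mem_range.1 hi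
        simp only [t, if_pos hi.le, if_pos (Nat.succ_le_of_lt hi), edist_comm]
    _ ≤ ∑ i ∈ Finset.range (n + 2), edist (γ (t i)) (γ (t (i + 1))) := by
        rw [Finset.sum_range_succ, Finset.sum_range_succ']
        exact le_add_right le_self_add
    _ ≤ pathLengthE edist γ := sum_range_le_pathLengthE edist γ ht rfl (by simp [t])

theorem LocallyLipWith.eventually_edist_le {M N : Type*} [MetricSpace M] [PseudoEMetricSpace N]
    {C : ℝ} {f : M → N} (hf : LocallyLipWith edist C f) {C' : ℝ≥0∞}
    (hC' : ENNReal.ofReal C < C') (x : M) :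
    ∀ᶠ y in 𝓝 x, edist (f x) (f y) ≤ C' * edist x y := by
  filter_upwards [eventually_nhdsWithin_iff.1
    (eventually_lt_of_limsup_lt ((hf x).trans_lt hC'))] with y hy
  obtain rfl | hxy := eq_or_ne y x
  · simp
  · exact (ENNReal.div_le_iff (edist_pos.2 hxy.symm).ne' (edist_ne_top _ _)).1 (hy hxy).le

theorem IsLengthSpace.lipschitzWith {M N : Type*} [MetricSpace M] [PseudoEMetricSpace N]
    (hM : IsLengthSpace M) {C : ℝ≥0} {f : M → N} (hf : LocallyLipWith edist C f) :
    LipschitzWith C f := by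
  intro x y
  refine ENNReal.le_mul_of_forall_lt (.inr (edist_ne_top _ _)) (.inl coe_ne_top)
    fun C' hC' r hr => ?_
  rw [gt_iff_lt, hM x y] at hr
  simp only [iInf_lt_iff] at hr
  obtain ⟨γ, hγ, rfl, rfl, hlt⟩ := hr
  calc edist (f (γ 0)) (f (γ 1)) ≤ C' * eVariationOn γ (Set.Icc 0 1) :=
        edist_le_mul_eVariationOn_of_eventually (f := f ∘ γ)
          (fun t ht => (hγ t ht).eventually
            (hf.eventually_edist_le (by rwa [ofReal_coe_nnreal]) (γ t))) zero_le_one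
    _ ≤ C' * r := by gcongr; exact (eVariationOn_le_pathLengthE γ).trans hlt.le

section Coupling

variable {X Y : Type*} [MeasurableSpace X] [MeasurableSpace Y]

namespace IsCoupling

variable {η θ : Measure (X × X)} {μ ν ρ : Measure X}

theorem lintegral_fst (h : IsCoupling η μ ν) {f : X → ℝ≥0∞} (hf : Measurable f) :
    ∫⁻ z, f z.1 ∂η = ∫⁻ x, f x ∂μ := by
  rw [← h.1, lintegral_map hf measurable_fst]

theorem lintegral_snd (h : IsCoupling η μ ν) {f : X → ℝ≥0∞} (hf : Measurable f) :
    ∫⁻ z, f z.2 ∂η = ∫⁻ x, f x ∂ν := by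
  rw [← h.2, lintegral_map hf measurable_snd]

theorem isProbabilityMeasure [IsProbabilityMeasure μ] (h : IsCoupling η μ ν) :
    IsProbabilityMeasure η :=
  ⟨by simpa using h.lintegral_fst (measurable_const (a := 1))⟩

protected theorem swap (h : IsCoupling η μ ν) : IsCoupling (η.map Prod.swap) ν μ :=
  ⟨by rw [Measure.map_map measurable_fst measurable_swap]; exact h.2,
    by rw [Measure.map_map measurable_snd measurable_swap]; exact h.1⟩

protected theorem prod (μ ν : Measure X) [IsProbabilityMeasure μ] [IsProbabilityMeasure ν] :
    IsCoupling (μ.prod ν) μ ν :=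
  ⟨by simp [Measure.map_fst_prod], by simp [Measure.map_snd_prod]⟩

theorem map_prodMk_s4 (ρ : Measure Y) {f g : Y → X} (hf : Measurable f) (hg : Measurable g) :
    IsCoupling (ρ.map fun y => (f y, g y)) (ρ.map f) (ρ.map g) :=
  ⟨Measure.map_map measurable_fst (hf.prodMk hg), Measure.map_map measurable_snd (hf.prodMk hg)⟩

protected theorem map (h : IsCoupling η μ ν) {f : X → Y} (hf : Measurable f) :
    IsCoupling (η.map (Prod.map f f)) (μ.map f) (ν.map f) := by
  rw [← h.1, ← h.2, Measure.map_map hf measurable_fst, Measure.map_map hf measurable_snd]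
  exact map_prodMk_s4 η (hf.comp measurable_fst) (hf.comp measurable_snd)

protected theorem bind (h : IsCoupling η μ ν) {κ κ' : Kernel X Y}
    {K : Kernel (X × X) (Y × Y)} (hK : ∀ z, IsCoupling (K z) (κ z.1) (κ' z.2)) :
    IsCoupling (η.bind K) (μ.bind κ) (ν.bind κ') := by
  constructor <;> refine Measure.ext_of_lintegral _ fun f hf => ?_
  · rw [lintegral_map hf measurable_fst,
      Measure.lintegral_bind K.aemeasurable (by fun_prop),
      Measure.lintegral_bind κ.aemeasurable hf.aemeasurable]
    exact (lintegral_congr fun z => (hK z).lintegral_fst hf).trans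
      (h.lintegral_fst hf.lintegral_kernel)
  · rw [lintegral_map hf measurable_snd,
      Measure.lintegral_bind K.aemeasurable (by fun_prop),
      Measure.lintegral_bind κ'.aemeasurable hf.aemeasurable]
    exact (lintegral_congr fun z => (hK z).lintegral_snd hf).trans
      (h.lintegral_snd hf.lintegral_kernel)

theorem exists_glue [StandardBorelSpace X] [Nonempty X] [IsFiniteMeasure η] [IsFiniteMeasure θ]
    (h : IsCoupling η μ ν) (h' : IsCoupling θ ν ρ) :
    ∃ ζ : Measure ((X × X) × X),
      ζ.map Prod.fst = η ∧ ζ.map (fun z => (z.1.2, z.2)) = θ := by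
  refine ⟨η ⊗ₘ θ.condKernel.comap Prod.snd measurable_snd, Measure.fst_compProd _ _,
    Measure.ext_of_lintegral _ fun f hf => ?_⟩
  have : IsFiniteMeasure ν := h.2 ▸ inferInstance
  have hθ : ν ⊗ₘ θ.condKernel = θ := by
    rw [← h'.1]; exact θ.disintegrate θ.condKernel
  rw [lintegral_map hf (by fun_prop), Measure.lintegral_compProd (by fun_prop)]
  calc ∫⁻ z, ∫⁻ y, f (z.2, y) ∂θ.condKernel z.2 ∂η
      = ∫⁻ x, ∫⁻ y, f (x, y) ∂θ.condKernel x ∂ν :=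
        h.lintegral_snd (f := fun x => ∫⁻ y, f (x, y) ∂θ.condKernel x) (by fun_prop)
    _ = ∫⁻ z, f z ∂θ := by rw [← Measure.lintegral_compProd hf, hθ]

end IsCoupling

end Coupling

section Wasserstein

variable {X Y : Type*} [MeasurableSpace X] [MeasurableSpace Y] {d d' : X → X → ℝ≥0∞} {p : ℝ}
  {μ ν ρ : Measure X}

theorem wassersteinE_le {η : Measure (X × X)} (h : IsCoupling η μ ν) :
    wassersteinE d p μ ν ≤ (∫⁻ z, d z.1 z.2 ^ p ∂η) ^ (1 / p) :=
  iInf₂_le η h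

theorem le_wassersteinE_iff {a : ℝ≥0∞} :
    a ≤ wassersteinE d p μ ν ↔
      ∀ η, IsCoupling η μ ν → a ≤ (∫⁻ z, d z.1 z.2 ^ p ∂η) ^ (1 / p) :=
  le_iInf₂_iff

theorem wassersteinE_lt_iff (hp : 0 < p) {a : ℝ≥0∞} :
    wassersteinE d p μ ν < a ↔ ∃ η, IsCoupling η μ ν ∧ ∫⁻ z, d z.1 z.2 ^ p ∂η < a ^ p := by
  simp only [wassersteinE, iInf_lt_iff, exists_prop, one_div, ENNReal.rpow_inv_lt_iff hp]

theorem wassersteinE_mono (hp : 0 ≤ p) (h : ∀ x y, d x y ≤ d' x y) :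
    wassersteinE d p μ ν ≤ wassersteinE d' p μ ν :=
  iInf₂_mono fun η _ => by gcongr; exact h _ _

theorem wassersteinE_mono_exponent {q : ℝ} (hd : Measurable (Function.uncurry d)) (hp : 0 < p)
    (hpq : p ≤ q) [IsProbabilityMeasure μ] :
    wassersteinE d p μ ν ≤ wassersteinE d q μ ν := by
  refine iInf₂_mono fun η hη => ?_
  have := hη.isProbabilityMeasure
  exact eLpNorm'_le_eLpNorm'_of_exponent_le hp hpq η hd.aestronglyMeasurable

theorem wassersteinE_const_mul [IsProbabilityMeasure μ] [IsProbabilityMeasure ν] (hp : 0 < p)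
    {c : ℝ≥0∞} (hc : c ≠ ⊤) :
    wassersteinE (fun x y => c * d x y) p μ ν = c * wassersteinE d p μ ν := by
  have : Nonempty {η : Measure (X × X) // IsCoupling η μ ν} := ⟨μ.prod ν, .prod μ ν⟩
  simp_rw [wassersteinE, iInf_subtype']
  rw [ENNReal.mul_iInf' (fun h => absurd h hc) fun _ => this]
  refine iInf_congr fun η => ?_
  simp_rw [ENNReal.mul_rpow_of_nonneg _ _ hp.le]
  rw [lintegral_const_mul' _ _ (ENNReal.rpow_ne_top_of_nonneg hp.le hc),
    ENNReal.mul_rpow_of_nonneg _ _ (by positivity), ← ENNReal.rpow_mul,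
    mul_one_div_cancel hp.ne', ENNReal.rpow_one]

theorem wassersteinE_add_const_le [IsProbabilityMeasure μ] (hd : Measurable (Function.uncurry d))
    (hp : 1 ≤ p) (c : ℝ≥0∞) :
    wassersteinE (fun x y => d x y + c) p μ ν ≤ wassersteinE d p μ ν + c := by
  simp_rw [wassersteinE, ENNReal.iInf_add]
  refine iInf₂_mono fun η hη => ?_
  have := hη.isProbabilityMeasure
  have hpc : (c ^ p) ^ (1 / p) = c := by
    rw [← ENNReal.rpow_mul, mul_one_div_cancel (by positivity), ENNReal.rpow_one]
  simpa only [Pi.add_apply, Function.uncurry, lintegral_const, measure_univ, mul_one, hpc] using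
    ENNReal.lintegral_Lp_add_le (μ := η) hd.aemeasurable (aemeasurable_const (b := c)) hp

theorem wassersteinE_map_le {d : Y → Y → ℝ≥0∞} {f : X → Y} (hf : Measurable f) (hp : 0 ≤ p) :
    wassersteinE d p (μ.map f) (ν.map f) ≤ wassersteinE (fun x y => d (f x) (f y)) p μ ν :=
  le_wassersteinE_iff.2 fun η hη => (wassersteinE_le (hη.map hf)).trans <| by
    gcongr
    exact lintegral_map_le _ _

theorem wassersteinE_self (hd : Measurable (Function.uncurry d)) (h₀ : ∀ x, d x x = 0)
    (hp : 0 < p) : wassersteinE d p μ μ = 0 := by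
  have hcpl : IsCoupling (μ.map fun x => (x, x)) μ μ := by
    simpa using IsCoupling.map_prodMk_s4 μ measurable_id measurable_id
  refine le_antisymm ((wassersteinE_le hcpl).trans_eq ?_) zero_le
  rw [lintegral_map (by exact hd.pow_const p) (by fun_prop)]
  simp [h₀, hp]

theorem wassersteinE_comm (hd : Measurable (Function.uncurry d)) (hsymm : ∀ x y, d x y = d y x) :
    wassersteinE d p μ ν = wassersteinE d p ν μ := by
  suffices ∀ μ ν : Measure X, wassersteinE d p μ ν ≤ wassersteinE d p ν μ from
    le_antisymm (this μ ν) (this ν μ)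
  refine fun μ ν => le_wassersteinE_iff.2 fun η hη => (wassersteinE_le hη.swap).trans_eq ?_
  rw [lintegral_map (by exact hd.pow_const p) measurable_swap]
  simp only [Prod.fst_swap, Prod.snd_swap, hsymm]

theorem wassersteinE_triangle [StandardBorelSpace X] (hd : Measurable (Function.uncurry d))
    (htri : ∀ x y z, d x z ≤ d x y + d y z) (hp : 1 ≤ p) [IsProbabilityMeasure μ]
    [IsProbabilityMeasure ν] :
    wassersteinE d p μ ρ ≤ wassersteinE d p μ ν + wassersteinE d p ν ρ := by
  have : Nonempty X := nonempty_of_isProbabilityMeasure μ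
  rw [wassersteinE, wassersteinE, wassersteinE]
  simp_rw [ENNReal.iInf_add, ENNReal.add_iInf]
  refine le_iInf₂ fun η hη => le_iInf₂ fun θ hθ => ?_
  have := hη.isProbabilityMeasure
  have := hθ.isProbabilityMeasure
  obtain ⟨ζ, hζη, hζθ⟩ := hη.exists_glue hθ
  have hcpl : IsCoupling (ζ.map fun z => (z.1.1, z.2)) μ ρ := by
    convert IsCoupling.map_prodMk_s4 ζ (f := fun z => z.1.1) (g := fun z => z.2)
      (by fun_prop) (by fun_prop)
    · rw [← hη.1, ← hζη, Measure.map_map (by fun_prop) (by fun_prop)]; rfl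
    · rw [← hθ.2, ← hζθ, Measure.map_map (by fun_prop) (by fun_prop)]; rfl
  have hdp : Measurable fun z : X × X => d z.1 z.2 ^ p := hd.pow_const p
  calc wassersteinE d p μ ρ
      ≤ (∫⁻ z, d z.1.1 z.2 ^ p ∂ζ) ^ (1 / p) :=
        (wassersteinE_le hcpl).trans_eq (by rw [lintegral_map hdp (by fun_prop)])
    _ ≤ (∫⁻ z, (d z.1.1 z.1.2 + d z.1.2 z.2) ^ p ∂ζ) ^ (1 / p) := by
        gcongr; exact htri _ _ _
    _ ≤ (∫⁻ z, d z.1.1 z.1.2 ^ p ∂ζ) ^ (1 / p) + (∫⁻ z, d z.1.2 z.2 ^ p ∂ζ) ^ (1 / p) :=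
        ENNReal.lintegral_Lp_add_le (hd.comp measurable_fst).aemeasurable
          (hd.comp (by fun_prop : Measurable fun z : (X × X) × X => (z.1.2, z.2))).aemeasurable hp
    _ = _ := by
        rw [← hζη, ← hζθ, lintegral_map hdp (by fun_prop), lintegral_map hdp (by fun_prop)]

theorem wassersteinE_dirac_left [MeasurableSingletonClass X]
    (hd : Measurable (Function.uncurry d)) (o : X) [IsProbabilityMeasure μ] :
    wassersteinE d p (.dirac o) μ = (∫⁻ x, d o x ^ p ∂μ) ^ (1 / p) := by
  have hdp : Measurable fun z : X × X => d z.1 z.2 ^ p := hd.pow_const p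
  refine le_antisymm ?_ (le_wassersteinE_iff.2 fun η hη => ?_)
  · have hcpl : IsCoupling (μ.map fun x => (o, x)) (.dirac o) μ := by
      simpa [Measure.map_const] using
        IsCoupling.map_prodMk_s4 μ (f := fun _ => o) measurable_const measurable_id
    exact (wassersteinE_le hcpl).trans_eq (by rw [lintegral_map hdp (by fun_prop)])
  · have ho : ∀ᵐ x ∂η.map Prod.fst, x = o := by rw [hη.1]; simp [ae_dirac_eq]
    rw [← hη.lintegral_snd (f := fun x => d o x ^ p) (hd.of_uncurry_left.pow_const p)]
    refine (congrArg (· ^ (1 / p)) (lintegral_congr_ae ?_)).le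
    filter_upwards [ae_of_ae_map measurable_fst.aemeasurable ho] with z hz
    rw [hz]

theorem hasFiniteMoment_iff_exists_wassersteinE_dirac_lt_top [MeasurableSingletonClass X]
    (hd : Measurable (Function.uncurry d)) (hp : 0 < p) [IsProbabilityMeasure μ] :
    HasFiniteMoment d p μ ↔ ∃ o, wassersteinE d p (.dirac o) μ < ⊤ := by
  simp only [HasFiniteMoment, wassersteinE_dirac_left hd, one_div,
    ENNReal.rpow_lt_top_iff_of_pos (inv_pos.2 hp)]

end Wasserstein

section WeakConvergence

theorem edist_integral_le_mul_wassersteinE {X E : Type*} [PseudoEMetricSpace X]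
    [SecondCountableTopology X] [MeasurableSpace X] [OpensMeasurableSpace X]
    [NormedAddCommGroup E] [NormedSpace ℝ E] {f : X → E} {K : ℝ≥0} (hf : LipschitzWith K f)
    {p : ℝ} (hp : 1 ≤ p) {μ ν : Measure X} [IsProbabilityMeasure μ] [IsProbabilityMeasure ν]
    (hμ : Integrable f μ) (hν : Integrable f ν) :
    edist (∫ x, f x ∂μ) (∫ x, f x ∂ν) ≤ K * wassersteinE edist p μ ν := by
  refine le_trans ?_ (mul_le_mul_right (wassersteinE_mono_exponent measurable_edist one_pos hp) _)
  rw [← wassersteinE_const_mul one_pos coe_ne_top]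
  refine le_wassersteinE_iff.2 fun η hη => ?_
  have hfst : Integrable (fun z => f z.1) η :=
    (hη.1 ▸ hμ : Integrable f (η.map Prod.fst)).comp_measurable measurable_fst
  have hsnd : Integrable (fun z => f z.2) η :=
    (hη.2 ▸ hν : Integrable f (η.map Prod.snd)).comp_measurable measurable_snd
  calc edist (∫ x, f x ∂μ) (∫ x, f x ∂ν) = ‖∫ z, (f z.1 - f z.2) ∂η‖ₑ := by
        rw [integral_sub hfst hsnd, edist_eq_enorm_sub]
        congr 2
        · rw [← hη.1, integral_map measurable_fst.aemeasurable
            (by rw [hη.1]; exact hμ.aestronglyMeasurable)]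
        · rw [← hη.2, integral_map measurable_snd.aemeasurable
            (by rw [hη.2]; exact hν.aestronglyMeasurable)]
    _ ≤ ∫⁻ z, ‖f z.1 - f z.2‖ₑ ∂η := enorm_integral_le_lintegral_enorm _
    _ ≤ ∫⁻ z, K * edist z.1 z.2 ∂η :=
        lintegral_mono fun z => by rw [← edist_eq_enorm_sub]; exact hf z.1 z.2
    _ = _ := by simp

theorem tendsto_of_tendsto_wassersteinE {X ι : Type*} [PseudoEMetricSpace X]
    [SecondCountableTopology X] [MeasurableSpace X] [OpensMeasurableSpace X] {l : Filter ι}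
    [l.IsCountablyGenerated] {p : ℝ} (hp : 1 ≤ p) {μs : ι → ProbabilityMeasure X}
    {μ : ProbabilityMeasure X}
    (h : Tendsto (fun i => wassersteinE edist p (μs i : Measure X) μ) l (𝓝 0)) :
    Tendsto μs l (𝓝 μ) := by
  refine tendsto_iff_forall_lipschitz_integral_tendsto.2 fun f ⟨B, hB⟩ ⟨K, hK⟩ => ?_
  have hint : ∀ ρ : ProbabilityMeasure X, Integrable f (ρ : Measure X) := fun ρ =>
    (BoundedContinuousFunction.mkOfBound ⟨f, hK.continuous⟩ B hB).integrable _
  rw [tendsto_iff_edist_tendsto_0]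
  refine tendsto_of_tendsto_of_tendsto_of_le_of_le tendsto_const_nhds
    (by simpa using ENNReal.Tendsto.const_mul (a := K) h (.inr coe_ne_top))
    (fun _ => zero_le) fun i => edist_integral_le_mul_wassersteinE hK hp (hint _) (hint _)

theorem tendsto_bind {X Y ι : Type*} [MeasurableSpace X] [TopologicalSpace Y] [MeasurableSpace Y]
    [OpensMeasurableSpace Y] {l : Filter ι} [l.IsCountablyGenerated] {κs : ι → Kernel X Y}
    [∀ i, IsMarkovKernel (κs i)] {κ : Kernel X Y} [IsMarkovKernel κ]
    (h : ∀ x, Tendsto (β := ProbabilityMeasure Y) (fun i => ⟨κs i x, inferInstance⟩) l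
      (𝓝 ⟨κ x, inferInstance⟩))
    (μ : Measure X) [IsProbabilityMeasure μ] :
    Tendsto (β := ProbabilityMeasure Y) (fun i => ⟨μ.bind (κs i), inferInstance⟩) l
      (𝓝 ⟨μ.bind κ, inferInstance⟩) := by
  refine ProbabilityMeasure.tendsto_iff_forall_lintegral_tendsto.2 fun f => ?_
  have hf : Measurable fun y => (f y : ℝ≥0∞) := f.continuous.measurable.coe_nnreal_ennreal
  simp only [ProbabilityMeasure.coe_mk,
    Measure.lintegral_bind (Kernel.aemeasurable _) hf.aemeasurable]
  refine tendsto_lintegral_filter_of_dominated_convergence (fun _ => (nndist f 0 : ℝ≥0∞))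
    (.of_forall fun i => hf.lintegral_kernel) (.of_forall fun i => .of_forall fun x => ?_) (by simp)
    (.of_forall fun x => ProbabilityMeasure.tendsto_iff_forall_lintegral_tendsto.1 (h x) f)
  calc ∫⁻ y, f y ∂κs i x ≤ ∫⁻ _, (nndist f 0 : ℝ≥0∞) ∂κs i x := by
        gcongr with y; exact BoundedContinuousFunction.NNReal.upper_bound f y
    _ = nndist f 0 := by simp

theorem exists_subseq_tendsto_isCoupling {Y : Type*} [TopologicalSpace Y] [PolishSpace Y]
    [MeasurableSpace Y] [BorelSpace Y] {μs νs : ℕ → ProbabilityMeasure Y}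
    {μ ν : ProbabilityMeasure Y} (hμ : Tendsto μs atTop (𝓝 μ)) (hν : Tendsto νs atTop (𝓝 ν))
    {ηs : ℕ → ProbabilityMeasure (Y × Y)}
    (hηs : ∀ n, IsCoupling (ηs n : Measure (Y × Y)) (μs n) (νs n)) :
    ∃ (η : ProbabilityMeasure (Y × Y)) (φ : ℕ → ℕ),
      StrictMono φ ∧ Tendsto (ηs ∘ φ) atTop (𝓝 η) ∧ IsCoupling (η : Measure (Y × Y)) μ ν := by
  let _ := TopologicalSpace.upgradeIsCompletelyMetrizable Y
  have htight : ∀ {ρs : ℕ → ProbabilityMeasure Y} {ρ : ProbabilityMeasure Y},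
      Tendsto ρs atTop (𝓝 ρ) → IsTightMeasureSet {m | ∃ σ ∈ Set.range ρs, (σ : Measure Y) = m} :=
    fun h => isTightMeasureSet_of_isCompact_closure <|
      h.isCompact_insert_range.closure_of_subset (Set.subset_insert _ _)
  have hcpt : IsCompact (closure (Set.range ηs)) := by
    refine isCompact_closure_of_isTightMeasureSet (.prodMk ?_ ?_)
    · refine (htight hμ).subset ?_
      rintro _ ⟨_, ⟨_, ⟨n, rfl⟩, rfl⟩, rfl⟩
      exact ⟨μs n, ⟨n, rfl⟩, (hηs n).1.symm⟩
    · refine (htight hν).subset ?_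
      rintro _ ⟨_, ⟨_, ⟨n, rfl⟩, rfl⟩, rfl⟩
      exact ⟨νs n, ⟨n, rfl⟩, (hηs n).2.symm⟩
  obtain ⟨η, -, φ, hφ, hη⟩ := hcpt.tendsto_subseq fun n => subset_closure ⟨n, rfl⟩
  refine ⟨η, φ, hφ, hη, ?_, ?_⟩
  · have hfst := ProbabilityMeasure.tendsto_map_of_tendsto_of_continuous _ _ hη continuous_fst
    refine congrArg ProbabilityMeasure.toMeasure (tendsto_nhds_unique hfst ?_)
    exact (hμ.comp hφ.tendsto_atTop).congr fun n => Subtype.ext (hηs (φ n)).1.symm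
  · have hsnd := ProbabilityMeasure.tendsto_map_of_tendsto_of_continuous _ _ hη continuous_snd
    refine congrArg ProbabilityMeasure.toMeasure (tendsto_nhds_unique hsnd ?_)
    exact (hν.comp hφ.tendsto_atTop).congr fun n => Subtype.ext (hηs (φ n)).2.symm

theorem lintegral_le_liminf_lintegral_of_tendsto {Ω : Type*} [TopologicalSpace Ω]
    [MeasurableSpace Ω] [OpensMeasurableSpace Ω] [HasOuterApproxClosed Ω] {f : Ω → ℝ≥0}
    (hf : Continuous f) {μs : ℕ → ProbabilityMeasure Ω} {μ : ProbabilityMeasure Ω}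
    (h : Tendsto μs atTop (𝓝 μ)) :
    ∫⁻ x, f x ∂(μ : Measure Ω) ≤ liminf (fun n => ∫⁻ x, f x ∂(μs n : Measure Ω)) atTop := by
  simpa using lintegral_le_liminf_lintegral_of_forall_isOpen_measure_le_liminf_measure
    (μ := μ) (μs := fun n => μs n) (f := fun x => f x) (by fun_prop) (fun _ => NNReal.coe_nonneg _)
    fun G hG => by simpa using ProbabilityMeasure.le_liminf_measure_open_of_tendsto h hG

theorem wassersteinE_le_liminf {Y : Type*} [TopologicalSpace Y] [PolishSpace Y]
    [MeasurableSpace Y] [BorelSpace Y] {d : Y → Y → ℝ≥0} (hd : Continuous (Function.uncurry d))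
    {p : ℝ} (hp : 0 < p) {μs νs : ℕ → ProbabilityMeasure Y} {μ ν : ProbabilityMeasure Y}
    (hμ : Tendsto μs atTop (𝓝 μ)) (hν : Tendsto νs atTop (𝓝 ν)) :
    wassersteinE (fun x y => d x y) p (μ : Measure Y) ν ≤
      liminf (fun n => wassersteinE (fun x y => d x y) p (μs n : Measure Y) (νs n)) atTop := by
  refine le_of_forall_gt_imp_ge_of_dense fun a ha => ?_
  obtain ⟨φ, hφ, hlt⟩ := extraction_of_frequently_atTop (frequently_lt_of_liminf_lt (h := ha))
  choose ηs hηs hcost using fun n => (wassersteinE_lt_iff hp).1 (hlt n)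
  obtain ⟨η, ψ, -, hη, hcpl⟩ := exists_subseq_tendsto_isCoupling
    (hμ.comp hφ.tendsto_atTop) (hν.comp hφ.tendsto_atTop)
    (ηs := fun n => ⟨ηs n, (hηs n).isProbabilityMeasure⟩) hηs
  have hlsc := lintegral_le_liminf_lintegral_of_tendsto
    ((NNReal.continuous_rpow_const hp.le).comp hd) hη
  simp only [Function.comp_apply, Function.uncurry,
    ENNReal.coe_rpow_of_nonneg _ hp.le] at hlsc
  refine (wassersteinE_le hcpl).trans ?_
  rw [one_div, ENNReal.rpow_inv_le_iff hp]
  exact hlsc.trans (liminf_le_of_frequently_le' (.of_forall fun n => (hcost (ψ n)).le))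

end WeakConvergence

section KernelContraction

theorem bind_comap {X Y Z : Type*} [MeasurableSpace X] [MeasurableSpace Y] [MeasurableSpace Z]
    (μ : Measure X) (κ : Kernel Y Z) {f : X → Y} (hf : Measurable f) :
    μ.bind (κ.comap f hf) = (μ.map f).bind κ := by
  ext s hs
  rw [Measure.bind_apply hs (Kernel.aemeasurable _), Measure.bind_apply hs (Kernel.aemeasurable _),
    lintegral_map (κ.measurable_coe hs) hf]
  rfl

theorem wassersteinE_bind_le_of_forall_isCoupling {X Y : Type*} [MeasurableSpace X]
    [MeasurableSpace Y] {κ κ' : Kernel X Y} {K : Kernel (X × X) (Y × Y)}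
    (hK : ∀ z, IsCoupling (K z) (κ z.1) (κ' z.2)) {c : X → X → ℝ≥0∞} {d : Y → Y → ℝ≥0∞} {p : ℝ}
    (hp : 0 ≤ p) (hc : ∀ z, ∫⁻ w, d w.1 w.2 ^ p ∂K z ≤ c z.1 z.2 ^ p) (μ ν : Measure X) :
    wassersteinE d p (μ.bind κ) (ν.bind κ') ≤ wassersteinE c p μ ν :=
  le_wassersteinE_iff.2 fun η hη => (wassersteinE_le (hη.bind hK)).trans <| by
    gcongr
    exact (Measure.lintegral_bind_le _ _ _).trans (lintegral_mono hc)

theorem wassersteinE_bind_le_of_countable {ι Y : Type*} [Countable ι] [MeasurableSpace ι]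
    [MeasurableSingletonClass ι] [MeasurableSpace Y] {κ κ' : Kernel ι Y} {c : ι → ι → ℝ≥0∞}
    {d : Y → Y → ℝ≥0∞} {p : ℝ} (hp : 0 < p)
    (hc : ∀ i j, wassersteinE d p (κ i) (κ' j) < c i j) (μ ν : Measure ι) :
    wassersteinE d p (μ.bind κ) (ν.bind κ') ≤ wassersteinE c p μ ν := by
  choose θ hθ hlt using fun z : ι × ι => (wassersteinE_lt_iff hp).1 (hc z.1 z.2)
  exact wassersteinE_bind_le_of_forall_isCoupling (K := ⟨θ, measurable_of_countable θ⟩) hθ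
    hp.le (fun z => (hlt z).le) μ ν

theorem exists_measurable_edist_denseSeq_lt (M : Type*) [PseudoEMetricSpace M]
    [TopologicalSpace.SeparableSpace M] [Nonempty M] [MeasurableSpace M] [OpensMeasurableSpace M]
    {ε : ℝ≥0∞} (hε : ε ≠ 0) :
    ∃ f : M → ℕ, Measurable f ∧ ∀ x, edist (TopologicalSpace.denseSeq M (f x)) x < ε := by
  classical
  have hex : ∀ x : M, ∃ n, edist (TopologicalSpace.denseSeq M n) x < ε := fun x => by
    obtain ⟨_, ⟨n, rfl⟩, hn⟩ :=
      EMetric.mem_closure_iff.1 (TopologicalSpace.denseRange_denseSeq M x) ε hε.bot_lt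
    exact ⟨n, by rwa [edist_comm]⟩
  exact ⟨fun x => Nat.find (hex x), measurable_find hex fun n =>
    measurableSet_lt (by fun_prop) measurable_const, fun x => Nat.find_spec (hex x)⟩

theorem wassersteinE_bind_comap_le {M Y ι : Type*} [PseudoMetricSpace M]
    [TopologicalSpace.SeparableSpace M] [MeasurableSpace M] [OpensMeasurableSpace M]
    [MeasurableSpace Y] [Countable ι] [MeasurableSpace ι] [MeasurableSingletonClass ι]
    {κ : Kernel ι Y} {d : Y → Y → ℝ≥0∞} {p : ℝ} {K : ℝ≥0} (hp : 1 ≤ p) {x : ι → M}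
    (hκ : ∀ i j, wassersteinE d p (κ i) (κ j) ≤ K * edist (x i) (x j)) {f : M → ι}
    (hf : Measurable f) {ε : ℝ≥0∞} (hε : ε ≠ 0) (hxf : ∀ y, edist (x (f y)) y ≤ ε)
    (μ ν : Measure M) [IsProbabilityMeasure μ] [IsProbabilityMeasure ν] :
    wassersteinE d p (μ.bind (κ.comap f hf)) (ν.bind (κ.comap f hf)) ≤
      K * wassersteinE edist p μ ν + (2 * K + 1) * ε := by
  have hp₀ : 0 < p := one_pos.trans_le hp
  calc wassersteinE d p (μ.bind (κ.comap f hf)) (ν.bind (κ.comap f hf))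
      ≤ wassersteinE (fun i j => K * edist (x i) (x j) + ε) p (μ.map f) (ν.map f) := by
        rw [bind_comap, bind_comap]
        exact wassersteinE_bind_le_of_countable hp₀ (fun i j =>
          (hκ i j).trans_lt (ENNReal.lt_add_right (by finiteness) hε)) _ _
    _ ≤ wassersteinE (fun y z => K * edist (x (f y)) (x (f z)) + ε) p μ ν :=
        wassersteinE_map_le hf hp₀.le
    _ ≤ wassersteinE (fun y z => K * edist y z + (2 * K + 1) * ε) p μ ν := by
        refine wassersteinE_mono hp₀.le fun y z => ?_
        calc K * edist (x (f y)) (x (f z)) + ε ≤ K * (ε + edist y z + ε) + ε := by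
              gcongr
              exact (edist_triangle4 _ y z _).trans
                (by gcongr; exacts [hxf y, (edist_comm _ _).trans_le (hxf z)])
          _ = K * edist y z + (2 * K + 1) * ε := by ring
    _ ≤ wassersteinE (fun y z => K * edist y z) p μ ν + (2 * K + 1) * ε :=
        wassersteinE_add_const_le (measurable_edist.const_mul _) hp _
    _ = _ := by rw [wassersteinE_const_mul hp₀ coe_ne_top]

theorem wassersteinE_bind_le {M Y : Type*} [PseudoMetricSpace M]
    [TopologicalSpace.SeparableSpace M] [MeasurableSpace M] [OpensMeasurableSpace M]
    [MetricSpace Y] [CompleteSpace Y] [TopologicalSpace.SeparableSpace Y] [MeasurableSpace Y]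
    [BorelSpace Y] {κ : Kernel M Y} [IsMarkovKernel κ] {p : ℝ} {K : ℝ≥0} (hp : 1 ≤ p)
    (hκ : ∀ x y, wassersteinE edist p (κ x) (κ y) ≤ K * edist x y)
    (μ ν : Measure M) [IsProbabilityMeasure μ] [IsProbabilityMeasure ν] :
    wassersteinE edist p (μ.bind κ) (ν.bind κ) ≤ K * wassersteinE edist p μ ν := by
  have : Nonempty M := nonempty_of_isProbabilityMeasure μ
  obtain ⟨ε, -, hεpos, hε⟩ := exists_seq_strictAnti_tendsto' (zero_lt_one (α := ℝ≥0∞))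
  choose f hf hfε using fun n => exists_measurable_edist_denseSeq_lt M (hεpos n).1.ne'
  let x : ℕ → M := TopologicalSpace.denseSeq M
  let κx : Kernel ℕ Y := κ.comap x (measurable_of_countable x)
  have hκx : ∀ i j, wassersteinE edist p (κx i) (κx j) ≤ K * edist (x i) (x j) :=
    fun i j => hκ (x i) (x j)
  let κs : ℕ → Kernel M Y := fun n => κx.comap (f n) (hf n)
  have hbind : ∀ ρ : Measure M, [IsProbabilityMeasure ρ] →
      Tendsto (β := ProbabilityMeasure Y) (fun n => ⟨ρ.bind (κs n), inferInstance⟩) atTop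
        (𝓝 ⟨ρ.bind κ, inferInstance⟩) := fun ρ _ => by
    refine tendsto_bind (fun y => tendsto_of_tendsto_wassersteinE hp ?_) ρ
    refine tendsto_of_tendsto_of_tendsto_of_le_of_le tendsto_const_nhds
      (by simpa using ENNReal.Tendsto.const_mul (a := K) hε (.inr coe_ne_top))
      (fun _ => zero_le) fun n => ?_
    exact (hκ _ y).trans (by gcongr; exact (hfε n y).le)
  have hlim : Tendsto (fun n => K * wassersteinE edist p μ ν + (2 * K + 1) * ε n) atTop
      (𝓝 (K * wassersteinE edist p μ ν)) := by
    simpa using tendsto_const_nhds.add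
      (ENNReal.Tendsto.const_mul (a := 2 * (K : ℝ≥0∞) + 1) hε (.inr (by finiteness)))
  calc wassersteinE edist p (μ.bind κ) (ν.bind κ)
      ≤ liminf (fun n => wassersteinE edist p (μ.bind (κs n)) (ν.bind (κs n))) atTop := by
        have hlsc := wassersteinE_le_liminf continuous_nndist (one_pos.trans_le hp) (hbind μ)
          (hbind ν)
        simp only [← edist_nndist] at hlsc
        exact hlsc
    _ ≤ liminf (fun n => K * wassersteinE edist p μ ν + (2 * K + 1) * ε n) atTop :=
        liminf_le_liminf (.of_forall fun n =>
          wassersteinE_bind_comap_le hp hκx (hf n) (hεpos n).1.ne' (fun y => (hfε n y).le) μ ν)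
    _ = K * wassersteinE edist p μ ν := hlim.liminf_eq

end KernelContraction

/-- The `L^p` Wasserstein distance on the Borel probability measures of a Polish metric space, as
an extended pseudometric, so that maps `x ↦ P x` are maps between metric spaces. It is not an
instance because `ProbabilityMeasure Y` carries the coarser topology of weak convergence. -/
abbrev wassersteinPseudoEMetricSpace {Y : Type*} [MetricSpace Y] [CompleteSpace Y]
    [TopologicalSpace.SeparableSpace Y] [MeasurableSpace Y] [BorelSpace Y] {p : ℝ} (hp : 1 ≤ p) :
    PseudoEMetricSpace (ProbabilityMeasure Y) where
  edist μ ν := wassersteinE edist p (μ : Measure Y) ν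
  edist_self _ := wassersteinE_self measurable_edist edist_self (one_pos.trans_le hp)
  edist_comm _ _ := wassersteinE_comm measurable_edist edist_comm
  edist_triangle _ _ _ := wassersteinE_triangle measurable_edist edist_triangle hp

theorem IsLengthSpace.wassersteinE_le {M N : Type*} [MetricSpace M] [MetricSpace N]
    [CompleteSpace N] [TopologicalSpace.SeparableSpace N] [MeasurableSpace N] [BorelSpace N]
    (hM : IsLengthSpace M) {p : ℝ} (hp : 1 ≤ p) {C : ℝ≥0} {P : M → Measure N}
    [hP : ∀ x, IsProbabilityMeasure (P x)] (hlip : LocallyLipWith (wassersteinE edist p) C P)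
    (x y : M) : wassersteinE edist p (P x) (P y) ≤ C * edist x y :=
  let _ := wassersteinPseudoEMetricSpace (Y := N) hp
  have hlip' : LocallyLipWith (N := ProbabilityMeasure N) edist C fun x => ⟨P x, hP x⟩ := hlip
  hM.lipschitzWith hlip' x y

theorem HasFiniteMoment.bind {M N : Type*} [MetricSpace M] [TopologicalSpace.SeparableSpace M]
    [MeasurableSpace M] [OpensMeasurableSpace M] [MetricSpace N] [CompleteSpace N]
    [TopologicalSpace.SeparableSpace N] [MeasurableSpace N]
    [BorelSpace N] {p : ℝ} (hp : 1 ≤ p) {K : ℝ≥0} {κ : Kernel M N} [IsMarkovKernel κ]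
    (hκ : ∀ x y, wassersteinE edist p (κ x) (κ y) ≤ K * edist x y)
    (hκ₀ : ∃ x, HasFiniteMoment edist p (κ x)) {μ : Measure M} [IsProbabilityMeasure μ]
    (hμ : HasFiniteMoment edist p μ) : HasFiniteMoment edist p (μ.bind κ) := by
  have hp₀ : 0 < p := one_pos.trans_le hp
  obtain ⟨x, hx⟩ := hκ₀
  obtain ⟨y, hy⟩ := (hasFiniteMoment_iff_exists_wassersteinE_dirac_lt_top measurable_edist hp₀).1 hx
  obtain ⟨o, ho⟩ := (hasFiniteMoment_iff_exists_wassersteinE_dirac_lt_top measurable_edist hp₀).1 hμ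
  refine (hasFiniteMoment_iff_exists_wassersteinE_dirac_lt_top measurable_edist hp₀).2 ⟨y, ?_⟩
  calc wassersteinE edist p (.dirac y) (μ.bind κ)
      ≤ wassersteinE edist p (.dirac y) (κ x) + wassersteinE edist p (κ x) (μ.bind κ) :=
        wassersteinE_triangle measurable_edist edist_triangle hp
    _ ≤ wassersteinE edist p (.dirac y) (κ x) +
          (wassersteinE edist p (κ x) (κ o) + wassersteinE edist p (κ o) (μ.bind κ)) := by
        gcongr; exact wassersteinE_triangle measurable_edist edist_triangle hp
    _ ≤ wassersteinE edist p (.dirac y) (κ x) +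
          (K * edist x o + K * wassersteinE edist p (.dirac o) μ) := by
        gcongr
        · exact hκ x o
        · simpa [Measure.dirac_bind κ.measurable] using wassersteinE_bind_le hp hκ (.dirac o) μ
    _ < ⊤ := by finiteness

theorem local_to_global_coupling_general {M N : Type*} [MetricSpace M]
    [TopologicalSpace.SeparableSpace M] [MeasurableSpace M] [OpensMeasurableSpace M]
    [MetricSpace N] [CompleteSpace N] [TopologicalSpace.SeparableSpace N] [MeasurableSpace N]
    [BorelSpace N] (hM : IsLengthSpace M) {p : ℝ} (hp : 1 ≤ p) {C : ℝ≥0} {κ : Kernel M N}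
    [IsMarkovKernel κ] (hκ : LocallyLipWith (wassersteinE edist p) C κ) :
    ((∃ x, HasFiniteMoment edist p (κ x)) → ∀ μ : Measure M, [IsProbabilityMeasure μ] →
        HasFiniteMoment edist p μ → HasFiniteMoment edist p (μ.bind κ)) ∧
      ∀ μ ν : Measure M, [IsProbabilityMeasure μ] → [IsProbabilityMeasure ν] →
        wassersteinE edist p (μ.bind κ) (ν.bind κ) ≤ C * wassersteinE edist p μ ν :=
  have hlip := hM.wassersteinE_le hp hκ
  ⟨fun hκ₀ _ _ hμ => hμ.bind hp hlip hκ₀, fun μ ν _ _ => wassersteinE_bind_le hp hlip μ ν⟩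

/-- **Theorem 3 (Local-to-global coupling).** Let `(M,d)` be a Polish length space,
`p ≥ 1`, `C > 0`, and `P` a Markov transition kernel on `M` such that every `P_x` has a
finite `p`-th moment and `x ↦ P_x` is locally `C`-Lipschitz into `(Pr_{d,p}(M), W_{d,p})`.
Then `μ ↦ μP` preserves finiteness of `p`-th moments and is `C`-Lipschitz for `W_{d,p}`. -/
theorem local_to_global_coupling
    {M : Type*} [MetricSpace M] [CompleteSpace M] [TopologicalSpace.SeparableSpace M]
    [MeasurableSpace M] [BorelSpace M]
    (hlen : IsLengthSpace M) (p : ℝ) (hp : 1 ≤ p) (C : ℝ) (hC : 0 < C)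
    (P : M → Measure M) (hPmeas : Measurable P)
    (hPprob : ∀ x, IsProbabilityMeasure (P x))
    (hPmom : ∀ x, HasFiniteMoment edist p (P x))
    (hPlip : LocallyLipWith (wassersteinE edist p) C P) :
    (∀ μ : Measure M, IsProbabilityMeasure μ → HasFiniteMoment edist p μ →
        HasFiniteMoment edist p (μ.bind P)) ∧
      ∀ μ ν : Measure M, IsProbabilityMeasure μ → IsProbabilityMeasure ν →
        HasFiniteMoment edist p μ → HasFiniteMoment edist p ν →
          wassersteinE edist p (μ.bind P) (ν.bind P) ≤
            ENNReal.ofReal C * wassersteinE edist p μ ν := by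
  have : IsMarkovKernel (⟨P, hPmeas⟩ : Kernel M M) := ⟨hPprob⟩
  have hgen := local_to_global_coupling_general hlen hp (C := C.toNNReal)
    (κ := ⟨P, hPmeas⟩) (by rwa [Real.coe_toNNReal C hC.le])
  refine ⟨fun μ _ hμ => ?_, fun μ ν _ _ _ _ => hgen.2 μ ν⟩
  obtain ⟨x⟩ := nonempty_of_isProbabilityMeasure μ
  exact hgen.1 ⟨x, hPmom x⟩ μ hμ

end
end
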